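/- Let g(x) = ∏_{i=1}^{r}(x−α_i)^{n_i} and f(y) = ∏_{j=1}^{s}(y−β_j)^{m_j} be complex polynomials of the same degree d, with α₁,…,α_r pairwise distinct complex numbers, β₁,…,β_s pairwise distinct complex numbers, and all n_i, m_j positive. Assume that every singular point of the affine curve B = {(x,y) ∈ ℂ² : g(x) = f(y)} lies on {g = 0}; that is, whenever g(x) = f(y), g′(x) = 0 and f′(y) = 0, one has g(x) = 0. Let n = gcd(n₁,…,n_r) and m = gcd(m₁,…,m_s). Then the fundamental group of the complement ℂ² ∖ B = {(x,y) ∈ ℂ² : g(x) ≠ f(y)} (at any base point) is isomorphic to G_{m,n}. -/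

import Mathlib

set_option linter.all false

open Set Filter Topology unitInterval



namespace Arr

/-- A discrete `Γ`-cocycle, in gauge form, on an open cover of `X`. -/
structure Gauge (X Γ ι : Type*) [TopologicalSpace X] [Group Γ] where
  U : ι → Set X
  isOpen : ∀ i, IsOpen (U i)
  cov : ∀ x, ∃ i, x ∈ U i
  u : ι → X → Γ
  locConst : ∀ i j x, x ∈ U i → x ∈ U j →
    ∀ᶠ y in 𝓝 x, (u i y)⁻¹ * u j y = (u i x)⁻¹ * u j x

variable {X Γ ι : Type*} [TopologicalSpace X] [Group Γ]

/-- The bundle core of the gauge. -/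
noncomputable def Gauge.core (Z : Gauge X Γ ι) :
    letI : TopologicalSpace Γ := ⊥
    FiberBundleCore ι X Γ :=
  letI : TopologicalSpace Γ := ⊥
  haveI : DiscreteTopology Γ := ⟨rfl⟩
  { baseSet := Z.U
    isOpen_baseSet := Z.isOpen
    indexAt := fun x => (Z.cov x).choose
    mem_baseSet_at := fun x => (Z.cov x).choose_spec
    coordChange := fun i j x e => e * ((Z.u i x)⁻¹ * Z.u j x)
    coordChange_self := by intros; simp
    continuousOn_coordChange := by
      intro i j
      rintro ⟨x, e⟩ ⟨⟨hi, hj⟩, -⟩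
      apply ContinuousAt.continuousWithinAt
      refine (continuousAt_const (y := e * ((Z.u i x)⁻¹ * Z.u j x))).congr ?_
      have h1 := (Z.locConst i j x hi hj)
      have h2 : ∀ᶠ e' in 𝓝 e, e' = e := by
        rw [nhds_discrete]; simp
      have := h1.prod_nhds h2
      filter_upwards [this] with q hq
      rw [hq.1, hq.2]
    coordChange_comp := by
      intros; group }

/-- `φ` is a horizontal lift of `γ`. -/
def Gauge.IsLift (Z : Gauge X Γ ι) {x y : X} (γ : Path x y) (φ : I → Γ) : Prop :=
  ∀ t, ∃ i, γ t ∈ Z.U i ∧ ∀ᶠ s in 𝓝 t, φ s * Z.u i (γ s) = φ t * Z.u i (γ t)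

theorem exists_transport (Z : Gauge X Γ ι) :
    ∃ T : ∀ {x y : X}, Path x y → Γ,
      (∀ {x y : X} (γ γ' : Path x y), γ.Homotopic γ' → T γ = T γ') ∧
      (∀ {x y z : X} (γ : Path x y) (γ' : Path y z), T (γ.trans γ') = T γ * T γ') ∧
      (∀ {x y : X} (γ : Path x y) (φ : I → Γ), Z.IsLift γ φ → T γ = (φ 0)⁻¹ * φ 1) := by
  letI : TopologicalSpace Γ := ⊥
  haveI : DiscreteTopology Γ := ⟨rfl⟩
  let C := Z.core
  have cov : IsCoveringMap (Bundle.TotalSpace.proj : C.TotalSpace → X) :=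
    FiberBundle.isCoveringMap
  let idx : X → ι := C.indexAt
  have hidx : ∀ x, x ∈ Z.U (idx x) := C.mem_baseSet_at
  let mk : X → Γ → C.TotalSpace := fun x g => ⟨x, (g * Z.u (idx x) x : Γ)⟩
  let gc : C.TotalSpace → Γ := fun q => (show Γ from q.2) * (Z.u (idx q.1) q.1)⁻¹
  have gc_mk : ∀ x g, gc (mk x g) = g := by intro x g; simp [gc, mk]
  have triv : ∀ i q, (C.localTriv i q) = (q.1, gc q * Z.u i q.1) := by
    rintro i ⟨x, q⟩
    exact congrArg (Prod.mk x) (mul_assoc (show Γ from q) (Z.u (idx x) x)⁻¹ (Z.u i x)).symm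
  -- a lift from φ
  have lift_of : ∀ {x y : X} (γ : Path x y) (φ : I → Γ), Z.IsLift γ φ →
      Continuous fun t => mk (γ t) (φ t) := by
    intro x y γ φ h
    rw [continuous_iff_continuousAt]
    intro t
    obtain ⟨i, hi, hev⟩ := h t
    have hc : ContinuousAt γ t := γ.continuous.continuousAt
    refine ((C.localTriv i).toOpenPartialHomeomorph.continuousAt_iff_continuousAt_comp_left
      ?_).2 ?_
    · exact hc ((Z.isOpen i).mem_nhds hi)
    · have : ContinuousAt (fun s => (γ s, φ s * Z.u i (γ s))) t := by
        refine hc.prodMk ?_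
        exact (continuousAt_const (y := φ t * Z.u i (γ t))).congr
          (hev.mono fun s hs => hs.symm)
      refine this.congr (Eventually.of_forall fun s => ?_)
      simp only [Function.comp]
      have := triv i (mk (γ s) (φ s))
      rw [gc_mk] at this
      exact this.symm
  have of_lift : ∀ {x y : X} (γ : Path x y) (Φ : I → C.TotalSpace), Continuous Φ →
      (∀ t, (Φ t).1 = γ t) → Z.IsLift γ (fun t => gc (Φ t)) := by
    intro x y γ Φ hΦ hp t
    refine ⟨idx (γ t), hidx _, ?_⟩
    set i := idx (γ t)
    have h0 : ContinuousAt (C.localTriv i) (Φ t) := by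
      refine (C.localTriv i).toOpenPartialHomeomorph.continuousAt ?_
      change (Φ t).1 ∈ Z.U i
      rw [hp]; exact hidx _
    have h1 : ContinuousAt (fun s => (C.localTriv i (Φ s)).2) t :=
      (continuous_snd.continuousAt).comp (h0.comp hΦ.continuousAt)
    have h2 : ∀ᶠ s in 𝓝 t, (C.localTriv i (Φ s)).2 = (C.localTriv i (Φ t)).2 := by
      have := h1 (show {(C.localTriv i (Φ t)).2} ∈ 𝓝 _ by rw [nhds_discrete]; simp)
      exact this
    filter_upwards [h2] with s hs
    rw [triv, triv] at hs
    simpa [hp] using hs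
  have mon : ∀ {x y : X} (γ : Path x y) (φ : I → Γ), Z.IsLift γ φ →
      cov.monodromy (.mk γ) ⟨mk x (φ 0), rfl⟩ = ⟨mk y (φ 1), rfl⟩ := by
    intro x y γ φ h
    let Φ : Path (mk x (φ 0)) (mk y (φ 1)) :=
      ⟨⟨_, lift_of γ φ h⟩, by simp, by simp⟩
    refine cov.monodromy_eq_of_map_eq (.mk Φ) ?_
    rfl
  have exl : ∀ {x y : X} (γ : Path x y) (g : Γ), ∃ φ : I → Γ, Z.IsLift γ φ ∧ φ 0 = g := by
    intro x y γ g
    have hs : γ 0 = Bundle.TotalSpace.proj (mk x g) := by simp [mk]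
    refine ⟨fun t => gc (cov.liftPath γ (mk x g) hs t), of_lift γ _ (map_continuous _) ?_, ?_⟩
    · intro t
      exact congr_fun (cov.liftPath_lifts γ (mk x g) hs) t
    · simp [cov.liftPath_zero, gc_mk]
  have key : ∀ {x y : X} (γ : Path x y) (φ φ' : I → Γ), Z.IsLift γ φ → Z.IsLift γ φ' →
      (φ 0)⁻¹ * φ 1 = (φ' 0)⁻¹ * φ' 1 := by
    intro x y γ φ φ' h h'
    have h'' : Z.IsLift γ (fun t => φ 0 * (φ' 0)⁻¹ * φ' t) := by
      intro t
      obtain ⟨i, hi, he⟩ := h' t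
      refine ⟨i, hi, he.mono fun s hs => ?_⟩
      simp only [mul_assoc, hs]
    have e1 := mon γ φ h
    have e2 := mon γ _ h''
    have e0 : mk x (φ 0) = mk x (φ 0 * (φ' 0)⁻¹ * φ' 0) := by simp
    have : mk y (φ 1) = mk y (φ 0 * (φ' 0)⁻¹ * φ' 1) := by
      have e3 := congrArg Subtype.val e1
      have e4 := congrArg Subtype.val e2
      simp only [inv_mul_cancel_right] at e4
      exact e3.symm.trans e4
    have := congrArg gc this
    rw [gc_mk, gc_mk] at this
    rw [this]; group
  refine ⟨fun γ => (exl γ 1).choose 1, ?_, ?_, ?_⟩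
  · intro x y γ γ' hh
    have h1 := (exl γ 1).choose_spec
    have h2 := (exl γ' 1).choose_spec
    have m1 := mon γ _ h1.1
    have m2 := mon γ' _ h2.1
    have : (Path.Homotopic.Quotient.mk γ) = .mk γ' := Quotient.sound hh
    rw [this] at m1
    simp only [h1.2] at m1
    simp only [h2.2] at m2
    have := congrArg gc (congrArg Subtype.val (m1.symm.trans m2))
    rwa [gc_mk, gc_mk] at this
  · intro x y z γ γ'
    have h1 := (exl γ 1).choose_spec
    have h2 := (exl γ' 1).choose_spec
    have h3 := (exl (γ.trans γ') 1).choose_spec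
    obtain ⟨ψ, hψ, hψ0⟩ := exl γ' ((exl γ 1).choose 1)
    have m1 := mon γ _ h1.1
    have m2 := mon γ' _ hψ
    have m3 := mon _ _ h3.1
    have k := key γ' _ _ h2.1 hψ
    rw [h2.2, hψ0] at k
    simp only [h1.2] at m1
    simp only [h3.2] at m3
    simp only [hψ0] at m2
    have m4 := cov.monodromy_trans_apply (.mk γ) (.mk γ') ⟨mk x 1, rfl⟩
    rw [m1, m2] at m4
    have m5 := m3.symm.trans m4
    have := congrArg gc (congrArg Subtype.val m5)
    rw [gc_mk, gc_mk] at this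
    refine this.trans ?_
    simp only [inv_one, one_mul] at k
    change _ = _ * (exl γ' 1).choose 1
    rw [k]; group
  · intro x y γ φ h
    have h1 := (exl γ 1).choose_spec
    have := key γ _ _ h1.1 h
    rw [h1.2] at this
    simpa using this

end Arr


namespace Arr

/-- A functor from the fundamental groupoid of `X` to a group (left-to-right composition). -/
structure PathFun (X A : Type*) [TopologicalSpace X] [Group A] where
  f : ∀ {x y : X}, Path x y → A
  hom : ∀ {x y : X} (γ γ' : Path x y), γ.Homotopic γ' → f γ = f γ'
  trans : ∀ {x y z : X} (γ : Path x y) (γ' : Path y z), f (γ.trans γ') = f γ * f γ'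

namespace PathFun
variable {X A : Type*} [TopologicalSpace X] [Group A] (F : PathFun X A)

theorem refl (x : X) : F.f (Path.refl x) = 1 := by
  have h := F.trans (Path.refl x) (Path.refl x)
  rw [F.hom _ _ ⟨Path.Homotopy.reflTrans (Path.refl x)⟩] at h
  simpa using h

theorem symm {x y : X} (γ : Path x y) : F.f γ.symm = (F.f γ)⁻¹ := by
  have h := F.trans γ γ.symm
  rw [← F.hom _ _ ⟨Path.Homotopy.reflTransSymm γ⟩, F.refl] at h
  exact eq_inv_of_mul_eq_one_right h.symm

theorem cast {x y x' y' : X} (γ : Path x y) (h : x' = x) (h' : y' = y) :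
    F.f (γ.cast h h') = F.f γ := by
  subst h; subst h'; rfl

theorem ext_of_local (F' : PathFun X A)
    (h : ∀ x : X, ∃ U : Set X, IsOpen U ∧ x ∈ U ∧
      ∀ {y z : X} (γ : Path y z), range γ ⊆ U → F.f γ = F'.f γ)
    {x y : X} (γ : Path x y) : F.f γ = F'.f γ := by
  let S : Set I := {t | F.f (γ.subpath 0 t) = F'.f (γ.subpath 0 t)}
  have loc : ∀ t : I, ∀ᶠ s in 𝓝 t, (s ∈ S ↔ t ∈ S) := by
    intro t
    obtain ⟨U, hU, hx, hag⟩ := h (γ t)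
    have hn : γ ⁻¹' U ∈ 𝓝 t := γ.continuous.continuousAt (hU.mem_nhds hx)
    have hn' : ordConnectedComponent (γ ⁻¹' U) t ∈ 𝓝 t := ordConnectedComponent_mem_nhds.2 hn
    filter_upwards [hn'] with s hs
    have h1 : F.f (γ.subpath t s) = F'.f (γ.subpath t s) := by
      apply hag
      rw [Path.range_subpath]
      rintro _ ⟨r, hr, rfl⟩
      exact hs hr
    have h2 : ∀ G : PathFun X A, G.f (γ.subpath 0 s) = G.f (γ.subpath 0 t) * G.f (γ.subpath t s) := by
      intro G
      rw [← G.trans]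
      exact (G.hom _ _ ⟨Path.Homotopy.subpathTransSubpath γ 0 t s⟩).symm
    simp only [S, mem_setOf_eq]
    rw [h2 F, h2 F', h1]
    exact mul_left_inj _
  have hcl : IsClopen S := by
    constructor
    · rw [← isOpen_compl_iff, isOpen_iff_mem_nhds]
      intro t ht
      filter_upwards [loc t] with s hs
      exact fun hs' => ht (hs.1 hs')
    · rw [isOpen_iff_mem_nhds]
      intro t ht
      filter_upwards [loc t] with s hs
      exact hs.2 ht
  have h0 : (0 : I) ∈ S := by
    simp only [S, mem_setOf_eq, Path.subpath_self, refl]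
  have hu := hcl.eq_univ ⟨0, h0⟩
  have h1 : (1 : I) ∈ S := by rw [hu]; trivial
  simp only [S, mem_setOf_eq, Path.subpath_zero_one, PathFun.cast] at h1
  exact h1

end PathFun

/-- The universal functor to the (opposite) fundamental group. -/
theorem exists_universal {X : Type*} [TopologicalSpace X] [PathConnectedSpace X] (w : X) :
    ∃ J : PathFun X (FundamentalGroup X w)ᵐᵒᵖ,
      (∀ a, ∃ γ : Path w w, J.f γ = a) ∧
      ∀ (Γ : Type _) [Group Γ] (T : PathFun X Γ), ∃ (τ : (FundamentalGroup X w)ᵐᵒᵖ →* Γ) (c : X → Γ),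
        ∀ {x y : X} (γ : Path x y), τ (J.f γ) = c x * T.f γ * (c y)⁻¹ := by
  let Ψ : ∀ x : X, Path w x := fun x => PathConnectedSpace.somePath w x
  let q : Path w w → (FundamentalGroup X w)ᵐᵒᵖ := fun γ =>
    MulOpposite.op (FundamentalGroup.fromPath (.mk γ))
  have qh : ∀ γ γ' : Path w w, γ.Homotopic γ' → q γ = q γ' := by
    intro γ γ' h
    exact congrArg (fun z => MulOpposite.op (FundamentalGroup.fromPath z)) (Quotient.sound h)
  have qt : ∀ γ γ' : Path w w, q (γ.trans γ') = q γ * q γ' := by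
    intro γ γ'
    rfl
  have qs : ∀ a, ∃ γ, q γ = a := by
    intro a
    induction a using MulOpposite.rec' with | _ a =>
    obtain ⟨γ, hγ⟩ := Quotient.exists_rep (show Path.Homotopic.Quotient w w from a)
    exact ⟨γ, congrArg (fun z => MulOpposite.op (FundamentalGroup.fromPath z)) hγ⟩
  let J : PathFun X (FundamentalGroup X w)ᵐᵒᵖ :=
    { f := fun {x y} γ => q (((Ψ x).trans γ).trans (Ψ y).symm)
      hom := fun γ γ' h => qh _ _ (((Path.Homotopic.refl _).hcomp h).hcomp (.refl _))
      trans := by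
        intro x y z γ γ'
        rw [← qt]
        apply qh
        rw [← Path.Homotopic.Quotient.eq]
        simp only [Path.Homotopic.Quotient.mk_trans, Path.Homotopic.Quotient.mk_symm]
        simp [Path.Homotopic.Quotient.trans_assoc]
        rw [← Path.Homotopic.Quotient.trans_assoc (Path.Homotopic.Quotient.symm _)]
        simp }
  refine ⟨J, ?_, ?_⟩
  · intro a
    obtain ⟨γ, rfl⟩ := qs a
    refine ⟨((Ψ w).symm.trans γ).trans (Ψ w), ?_⟩
    apply qh
    rw [← Path.Homotopic.Quotient.eq]
    simp only [Path.Homotopic.Quotient.mk_trans, Path.Homotopic.Quotient.mk_symm]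
    simp [Path.Homotopic.Quotient.trans_assoc]
    rw [← Path.Homotopic.Quotient.trans_assoc]
    simp
  · intro Γ _ T
    have τ' : ∃ τ : (FundamentalGroup X w)ᵐᵒᵖ →* Γ, ∀ γ, τ (q γ) = T.f γ := by
      let t : Path.Homotopic.Quotient w w → Γ := Quotient.lift (fun γ => T.f γ)
        (fun γ γ' h => T.hom γ γ' h)
      have ht : ∀ γ, t (.mk γ) = T.f γ := fun γ => rfl
      refine ⟨⟨⟨fun a => t a.unop.toPath, ?_⟩, ?_⟩, fun γ => ht γ⟩
      · exact T.refl w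
      · intro a b
        obtain ⟨γ, rfl⟩ := qs a
        obtain ⟨γ', rfl⟩ := qs b
        exact T.trans γ γ'
    obtain ⟨τ, hτ⟩ := τ'
    refine ⟨τ, fun x => T.f (Ψ x), ?_⟩
    intro x y γ
    change τ (q _) = _
    rw [hτ, T.trans, T.trans, T.symm]

end Arr


namespace Arr

/-- `b` is an argument of the nonzero complex number `w`. -/
def Lft (w : ℂ) (b : ℝ) : Prop := w ≠ 0 ∧ w = ‖w‖ * Complex.exp (b * Complex.I)

theorem Lft.arg {w : ℂ} (h : w ≠ 0) : Lft w (Complex.arg w) :=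
  ⟨h, (Complex.norm_mul_exp_arg_mul_I w).symm⟩

theorem Lft.exists_int {w : ℂ} {b b' : ℝ} (h : Lft w b) (h' : Lft w b') :
    ∃ N : ℤ, b' = b + 2 * Real.pi * N := by
  have hw : (‖w‖ : ℂ) ≠ 0 := by simpa using h.1
  have h1 : Complex.exp (b' * Complex.I) = Complex.exp (b * Complex.I) :=
    mul_left_cancel₀ hw (h'.2.symm.trans h.2)
  obtain ⟨N, hN⟩ := Complex.exp_eq_exp_iff_exists_int.1 h1
  refine ⟨N, ?_⟩
  have : (b' : ℂ) = b + 2 * Real.pi * N := by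
    apply mul_right_cancel₀ Complex.I_ne_zero
    rw [hN]; ring
  exact_mod_cast this

theorem Lft.add {w : ℂ} {b : ℝ} (h : Lft w b) (N : ℤ) : Lft w (b + 2 * Real.pi * N) := by
  refine ⟨h.1, h.2.trans ?_⟩
  congr 1
  apply Complex.exp_eq_exp_iff_exists_int.2 ⟨-N, ?_⟩
  push_cast; ring

theorem Lft.add_two_pi {w : ℂ} {b : ℝ} (h : Lft w b) : Lft w (b + 2 * Real.pi) := by
  simpa using h.add 1

theorem Lft.of_div {w c : ℂ} (hc : c ≠ 0) (hw : w ≠ 0) :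
    Lft w (Complex.arg c + Complex.arg (w / c)) := by
  refine ⟨hw, ?_⟩
  have h1 := Complex.norm_mul_exp_arg_mul_I c
  have h2 := Complex.norm_mul_exp_arg_mul_I (w / c)
  have h3 : w = c * (w / c) := by field_simp
  push_cast
  rw [add_mul, Complex.exp_add]
  have h4 : ‖w‖ = ‖c‖ * ‖w / c‖ := by rw [← norm_mul, ← h3]
  calc w = c * (w / c) := h3
    _ = (‖c‖ * Complex.exp (Complex.arg c * Complex.I)) *
        (‖w / c‖ * Complex.exp (Complex.arg (w / c) * Complex.I)) := by rw [h1, h2]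
    _ = _ := by rw [h4]; push_cast; ring

/-- local continuous arguments -/
theorem exists_local_arg {X : Type*} [TopologicalSpace X] {K : X → ℂ} (hK : Continuous K)
    {V : Set X} (hV : IsOpen V) (hKV : ∀ z ∈ V, K z ≠ 0) {z : X} (hz : z ∈ V) :
    ∃ (U : Set X) (b : X → ℝ), IsOpen U ∧ z ∈ U ∧ U ⊆ V ∧ ContinuousOn b U ∧
      ∀ y ∈ U, Lft (K y) (b y) := by
  have hc := hKV z hz
  have hcont : Continuous fun y => K y / K z := hK.div_const _
  refine ⟨V ∩ (fun y => K y / K z) ⁻¹' Complex.slitPlane,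
    fun y => Complex.arg (K z) + Complex.arg (K y / K z),
    hV.inter (Complex.isOpen_slitPlane.preimage hcont), ⟨hz, ?_⟩, inter_subset_left, ?_, ?_⟩
  · simp [div_self hc]
  · intro y hy
    apply ContinuousAt.continuousWithinAt
    exact continuousAt_const.add (ContinuousAt.comp (f := fun y => K y / K z)
      (Complex.continuousAt_arg hy.2) hcont.continuousAt)
  · intro y hy
    exact Lft.of_div hc (hKV y hy.1)

theorem Lft.eventually_eq {X : Type*} [TopologicalSpace X] {K : X → ℂ} {b b' : X → ℝ} {z : X}
    (hb : ContinuousAt b z) (hb' : ContinuousAt b' z)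
    (h : ∀ᶠ y in 𝓝 z, Lft (K y) (b y)) (h' : ∀ᶠ y in 𝓝 z, Lft (K y) (b' y)) :
    ∃ N : ℤ, ∀ᶠ y in 𝓝 z, b' y = b y + 2 * Real.pi * N := by
  obtain ⟨N, hN⟩ := h.self_of_nhds.exists_int h'.self_of_nhds
  refine ⟨N, ?_⟩
  have hc : ContinuousAt (fun y => b' y - b y) z := hb'.sub hb
  have hpi := Real.pi_pos
  have : ∀ᶠ y in 𝓝 z, |(b' y - b y) - (b' z - b z)| < 2 * Real.pi := by
    have := hc.eventually (Metric.ball_mem_nhds _ (show (0:ℝ) < 2 * Real.pi by positivity))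
    filter_upwards [this] with y hy
    rw [Real.dist_eq] at hy
    exact hy
  filter_upwards [this, h, h'] with y hy h1 h2
  obtain ⟨N', hN'⟩ := h1.exists_int h2
  have e : (b' y - b y) - (b' z - b z) = 2 * Real.pi * ((N' - N : ℤ) : ℝ) := by
    rw [hN, hN']; push_cast; ring
  rw [e, abs_mul, abs_of_pos (by positivity : (0:ℝ) < 2 * Real.pi)] at hy
  have h3 : |((N' - N : ℤ) : ℝ)| < 1 := by
    by_contra hcon
    push Not at hcon
    nlinarith
  have h4 : |N' - N| < 1 := by exact_mod_cast h3
  have h5 : N' = N := by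
    rw [Int.abs_lt_one_iff] at h4; omega
  rw [hN', h5]

section Seq
variable {Γ : Type*} [Group Γ]

/-- ordered products indexed by the integers -/
theorem exists_prods (g : ℤ → Γ) : ∃ p : ℤ → Γ, p 0 = 1 ∧ ∀ l, p l = p (l - 1) * g l := by
  let a : ℕ → Γ := Nat.rec 1 (fun k x => x * g (k + 1))
  let b : ℕ → Γ := Nat.rec 1 (fun k x => x * (g (-k))⁻¹)
  refine ⟨fun l => match l with | Int.ofNat k => a k | Int.negSucc k => b (k + 1), rfl, ?_⟩
  intro l
  match l with
  | Int.ofNat 0 =>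
    change (1 : Γ) = (1 * (g (-(0:ℕ)))⁻¹) * g 0
    simp
  | Int.ofNat (k + 1) =>
    have : (Int.ofNat (k+1) - 1) = Int.ofNat k := by simp
    rw [this]
    change a k * g (k + 1) = a k * g (Int.ofNat (k+1))
    simp
  | Int.negSucc k =>
    have : (Int.negSucc k - 1) = Int.negSucc (k + 1) := by omega
    rw [this]
    change b (k + 1) = (b (k+1) * (g (-((k+1 : ℕ) : ℤ)))⁻¹) * g (Int.negSucc k)
    rw [show Int.negSucc k = -((k+1 : ℕ) : ℤ) by omega]
    simp

theorem prods_unique {g : ℤ → Γ} {p q : ℤ → Γ} (hp : ∀ l, p l = p (l - 1) * g l)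
    (hq : ∀ l, q l = q (l - 1) * g l) (l : ℤ) : q l = q 0 * (p 0)⁻¹ * p l := by
  induction l using Int.induction_on with
  | zero => simp
  | succ i ih =>
    rw [hp (i + 1), hq (i + 1)]; simp only [add_sub_cancel_right]
    rw [ih]; group
  | pred i ih =>
    have h1 := hp (-i)
    have h2 := hq (-i)
    have h3 : p (-i - 1) = p (-i) * (g (-i))⁻¹ := by rw [h1]; simp
    have h4 : q (-i - 1) = q (-i) * (g (-i))⁻¹ := by rw [h2]; simp
    rw [h3, h4, ih]; group

/-- The algebraic package: `p` on the integers. -/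
structure Prods (Γ : Type*) [Group Γ] (n m : ℕ) where
  p : ℤ → Γ
  addm : ∀ l, p (l + m) = p m * p l
  addn : ∀ l, p (l + n) = p l * p n
  zero : p 0 = 1

theorem Prods.mulm {n m : ℕ} (P : Prods Γ n m) (N l : ℤ) : P.p (l + m * N) = P.p (m * N) * P.p l := by
  have key : ∀ N l : ℤ, P.p (l + m * N) = P.p m ^ N * P.p l := by
    intro N
    induction N using Int.induction_on with
    | zero => simp
    | succ i ih =>
      intro l
      rw [show l + m * (i + 1 : ℤ) = (l + m * i) + m by ring, P.addm, ih, ← mul_assoc]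
      congr 1
      rw [add_comm, zpow_add, zpow_one]
    | pred i ih =>
      intro l
      have := P.addm (l + m * (-i - 1 : ℤ))
      rw [show l + m * (-i - 1 : ℤ) + m = l + m * (-i) by ring, ih] at this
      rw [show (-i - 1 : ℤ) = -1 + -i by ring, zpow_add, zpow_neg_one, mul_assoc]
      rw [show (-i - 1 : ℤ) = -1 + -i by ring] at this
      rw [this]; simp
  have h0 := key N 0
  rw [zero_add, P.zero, mul_one] at h0
  rw [key, h0]

theorem Prods.muln {n m : ℕ} (P : Prods Γ n m) (N l : ℤ) : P.p (l + n * N) = P.p l * P.p (n * N) := by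
  have key : ∀ N l : ℤ, P.p (l + n * N) = P.p l * P.p n ^ N := by
    intro N
    induction N using Int.induction_on with
    | zero => simp
    | succ i ih =>
      intro l
      rw [show l + n * (i + 1 : ℤ) = (l + n * i) + n by ring, P.addn, ih, mul_assoc]
      congr 1
      rw [zpow_add, zpow_one]
    | pred i ih =>
      intro l
      have := P.addn (l + n * (-i - 1 : ℤ))
      rw [show l + n * (-i - 1 : ℤ) + n = l + n * (-i) by ring, ih] at this
      rw [zpow_sub, zpow_one, ← mul_assoc, this]; simp
  have h0 := key N 0
  rw [zero_add, P.zero, one_mul] at h0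
  rw [key, h0]

end Seq

end Arr


namespace Arr

section Hat
variable {X : Type*} [TopologicalSpace X]

/-- Pairs of a point of `V` and an argument of `K`. -/
def Hat (K : X → ℂ) (V : Set X) : Type _ := {q : X × ℝ // q.1 ∈ V ∧ Lft (K q.1) q.2}

instance (K : X → ℂ) (V : Set X) : TopologicalSpace (Hat K V) :=
  inferInstanceAs (TopologicalSpace {q : X × ℝ // q.1 ∈ V ∧ Lft (K q.1) q.2})

variable {K : X → ℂ} {V : Set X}

/-- projection -/
def Hat.proj (q : Hat K V) : X := q.1.1

theorem Hat.continuous_proj : Continuous (Hat.proj : Hat K V → X) :=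
  continuous_fst.comp continuous_subtype_val

/-- deck transformation -/
noncomputable def Hat.shift (q : Hat K V) : Hat K V :=
  ⟨(q.1.1, q.1.2 + 2 * Real.pi), q.2.1, q.2.2.add_two_pi⟩

theorem Hat.continuous_shift : Continuous (Hat.shift : Hat K V → Hat K V) := by
  refine Continuous.subtype_mk ?_ _
  have : Continuous fun q : Hat K V => q.1 := continuous_subtype_val
  fun_prop

/-- parallel paths in the hat space become homotopic below -/
def Hat.Par (K : X → ℂ) (V : Set X) : Prop :=
  ∀ (p q : Hat K V) (γ γ' : Path p q),
    (γ.map Hat.continuous_proj).Homotopic (γ'.map Hat.continuous_proj)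

theorem Hat.exists_theta {A : Type*} [Group A] (J : PathFun X A) [PathConnectedSpace (Hat K V)]
    (hpar : Hat.Par K V) :
    ∃ (θ : Hat K V → A) (ζ : A),
      (∀ (p q : Hat K V) (γ : Path p q), θ q = θ p * J.f (γ.map Hat.continuous_proj)) ∧
      (∀ q, θ q.shift = ζ * θ q) := by
  obtain ⟨v⟩ := (inferInstance : Nonempty (Hat K V))
  let pth : ∀ q, Path v q := fun q => PathConnectedSpace.somePath v q
  let θ : Hat K V → A := fun q => J.f ((pth q).map Hat.continuous_proj)
  have h1 : ∀ (p q : Hat K V) (γ : Path p q), θ q = θ p * J.f (γ.map Hat.continuous_proj) := by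
    intro p q γ
    simp only [θ]
    rw [← J.trans, ← Path.map_trans]
    exact J.hom _ _ (hpar _ _ _ _)
  refine ⟨θ, θ v.shift, h1, ?_⟩
  intro q
  rw [h1 _ _ ((pth q).map Hat.continuous_shift)]
  rfl

/-- path in the hat space from a local argument -/
theorem Hat.exists_path {U : Set X} {b : X → ℝ} (hU : U ⊆ V) (hb : ContinuousOn b U)
    (hl : ∀ y ∈ U, Lft (K y) (b y)) {x y : X} (γ : Path x y) (hγ : range γ ⊆ U)
    (hx : x ∈ U) (hy : y ∈ U) :
    ∃ γ' : Path (⟨(x, b x), hU hx, hl x hx⟩ : Hat K V) ⟨(y, b y), hU hy, hl y hy⟩,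
      γ'.map Hat.continuous_proj = γ := by
  have hm : ∀ t, γ t ∈ U := fun t => hγ ⟨t, rfl⟩
  have hc : Continuous fun t : I => b (γ t) := hb.comp_continuous γ.continuous hm
  refine ⟨⟨⟨fun t => ⟨(γ t, b (γ t)), hU (hm t), hl _ (hm t)⟩, ?_⟩, ?_, ?_⟩, ?_⟩
  · exact Continuous.subtype_mk (γ.continuous.prodMk hc) _
  · simp
  · simp
  · ext t; rfl

end Hat

/-- Topological data to which the van Kampen type theorem applies. -/
structure VK (X : Type*) [TopologicalSpace X] (n m : ℕ) where
  H : X → ℂ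
  K : X → ℂ
  V : Set X
  W : Set X
  cH : Continuous H
  cK : Continuous K
  oV : IsOpen V
  oW : IsOpen W
  cov : ∀ z, z ∈ V ∨ z ∈ W
  hK : ∀ z ∈ V, K z ≠ 0
  hH : ∀ z ∈ W, H z ≠ 0
  hM : ∀ z ∈ V, z ∈ W → ∀ r : ℝ, 0 < r → H z ^ n ≠ r * K z ^ m

variable {X : Type*} [TopologicalSpace X] {n m : ℕ}

/-- the strip condition -/
def Strip (n m : ℕ) (l : ℤ) (a b : ℝ) : Prop :=
  2 * Real.pi * l < n * a - m * b ∧ n * a - m * b < 2 * Real.pi * (l + 1)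

theorem VK.exists_strip (D : VK X n m) {z : X} (hV : z ∈ D.V) (hW : z ∈ D.W) {a b : ℝ}
    (ha : Lft (D.H z) a) (hb : Lft (D.K z) b) :
    Strip n m ⌊(n * a - m * b) / (2 * Real.pi)⌋ a b := by
  have hpi : (0:ℝ) < 2 * Real.pi := by positivity
  set l := ⌊(n * a - m * b) / (2 * Real.pi)⌋ with hl
  have h1 := Int.floor_le ((n * a - m * b) / (2 * Real.pi))
  have h2 := Int.lt_floor_add_one ((n * a - m * b) / (2 * Real.pi))
  rw [le_div_iff₀ hpi] at h1
  rw [div_lt_iff₀ hpi] at h2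
  rw [← hl] at h1 h2
  refine ⟨lt_of_le_of_ne (by linarith) ?_, by linarith⟩
  intro heq
  have hH := ha.1
  have hK := hb.1
  apply D.hM z hV hW (‖D.H z‖ ^ n / ‖D.K z‖ ^ m) (by positivity)
  have e1 : D.H z ^ n = ‖D.H z‖ ^ n * Complex.exp ((n * a : ℝ) * Complex.I) := by
    conv_lhs => rw [ha.2, mul_pow, ← Complex.exp_nat_mul]
    push_cast; ring_nf
  have e2 : D.K z ^ m = ‖D.K z‖ ^ m * Complex.exp ((m * b : ℝ) * Complex.I) := by
    conv_lhs => rw [hb.2, mul_pow, ← Complex.exp_nat_mul]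
    push_cast; ring_nf
  have e3 : Complex.exp ((n * a : ℝ) * Complex.I) = Complex.exp ((m * b : ℝ) * Complex.I) := by
    apply Complex.exp_eq_exp_iff_exists_int.2 ⟨l, ?_⟩
    have : (n * a : ℝ) = m * b + 2 * Real.pi * l := by linarith
    rw [this]; push_cast; ring
  have hK' : (‖D.K z‖ : ℂ) ≠ 0 := by simpa using hK
  rw [e1, e2, e3]
  push_cast
  field_simp

theorem Strip.unique {l l' : ℤ} {a b : ℝ} (h : Strip n m l a b) (h' : Strip n m l' a b) :
    l = l' := by
  have hpi : (0:ℝ) < 2 * Real.pi := by positivity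
  have h1 : 2 * Real.pi * l < 2 * Real.pi * (l' + 1) := h.1.trans h'.2
  have h2 : 2 * Real.pi * l' < 2 * Real.pi * (l + 1) := h'.1.trans h.2
  have h3 : (l : ℝ) < l' + 1 := lt_of_mul_lt_mul_left h1 hpi.le
  have h4 : (l' : ℝ) < l + 1 := lt_of_mul_lt_mul_left h2 hpi.le
  have h5 : l < l' + 1 := by exact_mod_cast h3
  have h6 : l' < l + 1 := by exact_mod_cast h4
  omega

theorem Strip.addb {l : ℤ} {a b : ℝ} (h : Strip n m l a b) (N : ℤ) :
    Strip n m (l - m * N) a (b + 2 * Real.pi * N) := by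
  obtain ⟨h1, h2⟩ := h
  constructor <;> push_cast <;> linarith

theorem Strip.adda {l : ℤ} {a b : ℝ} (h : Strip n m l a b) (N : ℤ) :
    Strip n m (l + n * N) (a + 2 * Real.pi * N) b := by
  obtain ⟨h1, h2⟩ := h
  constructor <;> push_cast <;> linarith

theorem Strip.eventually {l : ℤ} {a b : X → ℝ} {z : X} (h : Strip n m l (a z) (b z))
    (ha : ContinuousAt a z) (hb : ContinuousAt b z) : ∀ᶠ y in 𝓝 z, Strip n m l (a y) (b y) := by
  have hc : ContinuousAt (fun y => n * a y - m * b y) z :=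
    (continuousAt_const.mul ha).sub (continuousAt_const.mul hb)
  exact (hc.eventually (lt_mem_nhds h.1)).and (hc.eventually (gt_mem_nhds h.2))

/-- the double lifts over `V ∩ W` in the strip `l` -/
def VK.MHat (D : VK X n m) (l : ℤ) : Type _ :=
  {q : X × ℝ × ℝ // q.1 ∈ D.V ∧ q.1 ∈ D.W ∧ Lft (D.H q.1) q.2.1 ∧ Lft (D.K q.1) q.2.2 ∧
    Strip n m l q.2.1 q.2.2}

instance (D : VK X n m) (l : ℤ) : TopologicalSpace (D.MHat l) :=
  inferInstanceAs (TopologicalSpace {q : X × ℝ × ℝ // q.1 ∈ D.V ∧ q.1 ∈ D.W ∧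
    Lft (D.H q.1) q.2.1 ∧ Lft (D.K q.1) q.2.2 ∧ Strip n m l q.2.1 q.2.2})

section gauge
variable {Γ : Type*} [Group Γ] (P : Prods Γ n m) (D : VK X n m)

/-- gauge on `V` -/
noncomputable def VK.uV (z : X) (b : ℝ) : Γ :=
  P.p (m * round ((b - Complex.arg (D.K z)) / (2 * Real.pi)))

open Classical in
/-- gauge on `W` -/
noncomputable def VK.uW (z : X) (a : ℝ) : Γ :=
  if z ∈ D.V then P.p ⌊(n * a - m * Complex.arg (D.K z)) / (2 * Real.pi)⌋
  else P.p (n * round ((a - Complex.arg (D.H z)) / (2 * Real.pi)))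

theorem VK.uV_eq (z : X) (N : ℤ) :
    D.uV P z (Complex.arg (D.K z) + 2 * Real.pi * N) = P.p (m * N) := by
  have hpi : (2 * Real.pi) ≠ 0 := by positivity
  unfold VK.uV
  congr 2
  rw [show (Complex.arg (D.K z) + 2 * Real.pi * N - Complex.arg (D.K z)) / (2 * Real.pi) = N by
    field_simp; ring]
  simp

theorem VK.uW_eq {z : X} (h : z ∉ D.V) (N : ℤ) :
    D.uW P z (Complex.arg (D.H z) + 2 * Real.pi * N) = P.p (n * N) := by
  have hpi : (2 * Real.pi) ≠ 0 := by positivity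
  unfold VK.uW
  rw [if_neg h]
  congr 2
  rw [show (Complex.arg (D.H z) + 2 * Real.pi * N - Complex.arg (D.H z)) / (2 * Real.pi) = N by
    field_simp; ring]
  simp

theorem VK.uW_eq' {z : X} (h : z ∈ D.V) (hW : z ∈ D.W) {a : ℝ} (ha : Lft (D.H z) a) {l : ℤ}
    (hl : Strip n m l a (Complex.arg (D.K z))) :
    D.uW P z a = P.p l := by
  unfold VK.uW
  rw [if_pos h, (D.exists_strip h hW ha (Lft.arg (D.hK z h))).unique hl]

theorem VK.uVV {z : X} (h : z ∈ D.V) {b : ℝ} (hb : Lft (D.K z) b) (N : ℤ) :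
    (D.uV P z b)⁻¹ * D.uV P z (b + 2 * Real.pi * N) = P.p (m * N) := by
  obtain ⟨k, rfl⟩ := (Lft.arg (D.hK z h)).exists_int hb
  rw [show Complex.arg (D.K z) + 2 * Real.pi * k + 2 * Real.pi * N =
    Complex.arg (D.K z) + 2 * Real.pi * (k + N : ℤ) by push_cast; ring, D.uV_eq, D.uV_eq]
  rw [show (m : ℤ) * (k + N) = m * N + m * k by ring, P.mulm]
  simp

theorem VK.uVW {z : X} (h : z ∈ D.V) (hW : z ∈ D.W) {a b : ℝ} (ha : Lft (D.H z) a)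
    (hb : Lft (D.K z) b) {l : ℤ} (hl : Strip n m l a b) :
    (D.uV P z b)⁻¹ * D.uW P z a = P.p l := by
  obtain ⟨k, hk⟩ := (Lft.arg (D.hK z h)).exists_int hb
  have h2 : Complex.arg (D.K z) = b + 2 * Real.pi * (-k : ℤ) := by rw [hk]; push_cast; ring
  have h1 := hl.addb (-k)
  rw [← h2] at h1
  rw [D.uW_eq' P h hW ha h1]
  rw [hk, D.uV_eq]
  rw [show l - m * (-k) = l + m * k by ring, P.mulm]
  simp

theorem VK.uWW {z : X} (hW : z ∈ D.W) {a : ℝ} (ha : Lft (D.H z) a) (N : ℤ) :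
    (D.uW P z a)⁻¹ * D.uW P z (a + 2 * Real.pi * N) = P.p (n * N) := by
  by_cases h : z ∈ D.V
  · have h1 := D.exists_strip h hW ha (Lft.arg (D.hK z h))
    have h2 := h1.adda N
    rw [D.uW_eq' P h hW ha h1, D.uW_eq' P h hW (ha.add N) h2, P.muln]
    simp
  · obtain ⟨k, rfl⟩ := (Lft.arg (D.hH z hW)).exists_int ha
    rw [show Complex.arg (D.H z) + 2 * Real.pi * k + 2 * Real.pi * N =
      Complex.arg (D.H z) + 2 * Real.pi * (k + N : ℤ) by push_cast; ring, D.uW_eq P h,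
      D.uW_eq P h]
    rw [show (n : ℤ) * (k + N) = n * k + n * N by ring, P.muln]
    simp

/-- chart data -/
structure Chart (K : X → ℂ) (V : Set X) where
  U : Set X
  b : X → ℝ
  isOpen : IsOpen U
  sub : U ⊆ V
  cont : ContinuousOn b U
  lft : ∀ y ∈ U, Lft (K y) (b y)

/-- The gauge of the covering. -/
noncomputable def VK.gauge : Gauge X Γ (Chart D.K D.V ⊕ Chart D.H D.W) where
  U := Sum.elim Chart.U Chart.U
  isOpen := by rintro (c | c) <;> exact c.isOpen
  cov := by
    intro x
    rcases D.cov x with h | h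
    · obtain ⟨U, b, h1, h2, h3, h4, h5⟩ := exists_local_arg D.cK D.oV D.hK h
      exact ⟨Sum.inl ⟨U, b, h1, h3, h4, h5⟩, h2⟩
    · obtain ⟨U, b, h1, h2, h3, h4, h5⟩ := exists_local_arg D.cH D.oW D.hH h
      exact ⟨Sum.inr ⟨U, b, h1, h3, h4, h5⟩, h2⟩
  u := Sum.elim (fun c z => D.uV P z (c.b z)) (fun c z => D.uW P z (c.b z))
  locConst := by
    have hc : ∀ {K : X → ℂ} {V : Set X} (c : Chart K V) {x : X}, x ∈ c.U → ContinuousAt c.b x :=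
      fun c x hx => c.cont.continuousAt (c.isOpen.mem_nhds hx)
    have hl : ∀ {K : X → ℂ} {V : Set X} (c : Chart K V) {x : X}, x ∈ c.U →
        ∀ᶠ y in 𝓝 x, y ∈ V ∧ Lft (K y) (c.b y) := fun c x hx => by
      filter_upwards [c.isOpen.mem_nhds hx] with y hy
      exact ⟨c.sub hy, c.lft y hy⟩
    have main : ∀ (i j : Chart D.K D.V ⊕ Chart D.H D.W) (x : X), x ∈ Sum.elim Chart.U Chart.U i →
      x ∈ Sum.elim Chart.U Chart.U j → ∃ g : Γ, ∀ᶠ y in 𝓝 x,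
        ((Sum.elim (fun (c : Chart D.K D.V) z => D.uV P z (c.b z))
          (fun (c : Chart D.H D.W) z => D.uW P z (c.b z)) : _ → X → Γ) i y)⁻¹ *
        (Sum.elim (fun (c : Chart D.K D.V) z => D.uV P z (c.b z))
          (fun (c : Chart D.H D.W) z => D.uW P z (c.b z)) : _ → X → Γ) j y = g := by
      have vw : ∀ (c : Chart D.K D.V) (c' : Chart D.H D.W) (x : X), x ∈ c.U → x ∈ c'.U →
          ∃ g : Γ, ∀ᶠ y in 𝓝 x, (D.uV P y (c.b y))⁻¹ * D.uW P y (c'.b y) = g := by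
        intro c c' x hx hx'
        have h1 := D.exists_strip (c.sub hx) (c'.sub hx') (c'.lft x hx') (c.lft x hx)
        refine ⟨P.p ⌊(n * c'.b x - m * c.b x) / (2 * Real.pi)⌋, ?_⟩
        filter_upwards [hl c hx, hl c' hx', h1.eventually (hc c' hx') (hc c hx)] with y h2 h3 h4
        exact D.uVW P h2.1 h3.1 h3.2 h2.2 h4
      rintro (c | c) (c' | c') x hx hx'
      · obtain ⟨N, hN⟩ := Lft.eventually_eq (hc c hx) (hc c' hx')
          ((hl c hx).mono fun _ h => h.2) ((hl c' hx').mono fun _ h => h.2)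
        refine ⟨P.p (m * N), ?_⟩
        filter_upwards [hN, hl c hx] with y h1 h2
        simp only [Sum.elim_inl]
        rw [h1]
        exact D.uVV P h2.1 h2.2 N
      · exact vw c c' x hx hx'
      · obtain ⟨g, hg⟩ := vw c' c x hx' hx
        refine ⟨g⁻¹, hg.mono fun y hy => ?_⟩
        simp only [Sum.elim_inl, Sum.elim_inr]
        rw [← hy]; group
      · obtain ⟨N, hN⟩ := Lft.eventually_eq (hc c hx) (hc c' hx')
          ((hl c hx).mono fun _ h => h.2) ((hl c' hx').mono fun _ h => h.2)
        refine ⟨P.p (n * N), ?_⟩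
        filter_upwards [hN, hl c hx] with y h1 h2
        simp only [Sum.elim_inr]
        rw [h1]
        exact D.uWW P h2.1 h2.2 N
    intro i j x hi hj
    obtain ⟨g, hg⟩ := main i j x hi hj
    filter_upwards [hg] with y hy
    rw [hy]; exact hg.self_of_nhds.symm

/-- Transport along paths with a given continuous argument. -/
theorem VK.exists_T : ∃ T : PathFun X Γ,
    (∀ (p q : Hat D.K D.V) (γ : Path p q), T.f (γ.map Hat.continuous_proj) =
      D.uV P p.1.1 p.1.2 * (D.uV P q.1.1 q.1.2)⁻¹) ∧
    (∀ (p q : Hat D.H D.W) (γ : Path p q), T.f (γ.map Hat.continuous_proj) =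
      D.uW P p.1.1 p.1.2 * (D.uW P q.1.1 q.1.2)⁻¹) := by
  obtain ⟨T, h1, h2, h3⟩ := exists_transport (D.gauge P)
  refine ⟨⟨T, h1, h2⟩, ?_, ?_⟩
  · intro p q γ
    have := h3 (γ.map Hat.continuous_proj) (fun t => (D.uV P (γ t).1.1 (γ t).1.2)⁻¹) ?_
    · simp only [Path.source, Path.target, inv_inv] at this
      exact this
    · intro t
      obtain ⟨U, b, g1, g2, g3, g4, g5⟩ := exists_local_arg D.cK D.oV D.hK (γ t).2.1
      refine ⟨Sum.inl ⟨U, b, g1, g3, g4, g5⟩, g2, ?_⟩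
      have hcγ : Continuous fun s => (γ s).1 := continuous_subtype_val.comp γ.continuous
      have e1 : ∀ᶠ s in 𝓝 t, (γ s).1.1 ∈ U :=
        (continuous_fst.comp hcγ).continuousAt (g1.mem_nhds g2)
      obtain ⟨N, hN⟩ := Lft.eventually_eq (K := fun s => D.K (γ s).1.1) (b := fun s => (γ s).1.2)
        (b' := fun s => b (γ s).1.1) (z := t) (continuous_snd.comp hcγ).continuousAt
        (ContinuousAt.comp (f := fun s => (γ s).1.1) (g4.continuousAt (g1.mem_nhds g2))
          (continuous_fst.comp hcγ).continuousAt)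
        (Eventually.of_forall fun s => (γ s).2.2) (e1.mono fun s hs => g5 _ hs)
      have : ∀ᶠ s in 𝓝 t, (D.uV P (γ s).1.1 (γ s).1.2)⁻¹ * D.uV P (γ s).1.1 (b (γ s).1.1) =
          P.p (m * N) := by
        filter_upwards [hN] with s hs
        rw [hs]
        exact D.uVV P (γ s).2.1 (γ s).2.2 N
      filter_upwards [this] with s hs
      exact hs.trans this.self_of_nhds.symm
  · intro p q γ
    have := h3 (γ.map Hat.continuous_proj) (fun t => (D.uW P (γ t).1.1 (γ t).1.2)⁻¹) ?_
    · simp only [Path.source, Path.target, inv_inv] at this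
      exact this
    · intro t
      obtain ⟨U, b, g1, g2, g3, g4, g5⟩ := exists_local_arg D.cH D.oW D.hH (γ t).2.1
      refine ⟨Sum.inr ⟨U, b, g1, g3, g4, g5⟩, g2, ?_⟩
      have hcγ : Continuous fun s => (γ s).1 := continuous_subtype_val.comp γ.continuous
      have e1 : ∀ᶠ s in 𝓝 t, (γ s).1.1 ∈ U :=
        (continuous_fst.comp hcγ).continuousAt (g1.mem_nhds g2)
      obtain ⟨N, hN⟩ := Lft.eventually_eq (K := fun s => D.H (γ s).1.1) (b := fun s => (γ s).1.2)
        (b' := fun s => b (γ s).1.1) (z := t) (continuous_snd.comp hcγ).continuousAt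
        (ContinuousAt.comp (f := fun s => (γ s).1.1) (g4.continuousAt (g1.mem_nhds g2))
          (continuous_fst.comp hcγ).continuousAt)
        (Eventually.of_forall fun s => (γ s).2.2) (e1.mono fun s hs => g5 _ hs)
      have : ∀ᶠ s in 𝓝 t, (D.uW P (γ s).1.1 (γ s).1.2)⁻¹ * D.uW P (γ s).1.1 (b (γ s).1.1) =
          P.p (n * N) := by
        filter_upwards [hN] with s hs
        rw [hs]
        exact D.uWW P (γ s).2.1 (γ s).2.2 N
      filter_upwards [this] with s hs
      exact hs.trans this.self_of_nhds.symm

end gauge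

end Arr


namespace Arr

/-- The relators of `G_{m,n}`. -/
def Rels (m n : ℕ) : Set (FreeGroup (ZMod m)) := {w : FreeGroup (ZMod m) | ∃ kk : ZMod m,
      w = (FreeGroup.of kk)⁻¹ *
          (((List.range n).map (fun i => FreeGroup.of ((i + 1 : ℕ) : ZMod m))).prod) *
          FreeGroup.of (kk + (n : ZMod m)) *
          (((List.range n).map (fun i => FreeGroup.of ((i + 1 : ℕ) : ZMod m))).prod)⁻¹}

theorem prods_nat {Γ : Type*} [Group Γ] {g p : ℤ → Γ} (h0 : p 0 = 1)
    (hp : ∀ l, p l = p (l - 1) * g l) (k : ℕ) :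
    p k = ((List.range k).map (fun i => g ((i + 1 : ℕ) : ℤ))).prod := by
  induction k with
  | zero => simpa using h0
  | succ k ih =>
    rw [List.range_succ, List.map_append, List.prod_append, ← ih, hp]
    simp

/-- Abbreviation for the generator indexed by an integer. -/
def gen (m n : ℕ) (l : ℤ) : PresentedGroup (Rels m n) := PresentedGroup.of (l : ZMod m)

theorem exists_Prods (m n : ℕ) :
    ∃ P : Prods (PresentedGroup (Rels m n)) n m, ∀ l, P.p l = P.p (l - 1) * gen m n l := by
  obtain ⟨p, h0, hp⟩ := exists_prods (gen m n)
  have hω := prods_nat h0 hp n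
  have hrel : ∀ l : ℤ, gen m n (l + n) = (p n)⁻¹ * gen m n l * p n := by
    intro l
    have := PresentedGroup.one_of_mem (rels := Rels m n)
      (x := (FreeGroup.of (l : ZMod m))⁻¹ *
          (((List.range n).map (fun i => FreeGroup.of ((i + 1 : ℕ) : ZMod m))).prod) *
          FreeGroup.of ((l : ZMod m) + (n : ZMod m)) *
          (((List.range n).map (fun i => FreeGroup.of ((i + 1 : ℕ) : ZMod m))).prod)⁻¹) ⟨_, rfl⟩
    have hω' : PresentedGroup.mk (Rels m n) (((List.range n).map
        (fun i => FreeGroup.of ((i + 1 : ℕ) : ZMod m))).prod) = p n := by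
      rw [hω, map_list_prod, List.map_map]
      congr 1
      apply List.map_congr_left
      intro i _
      simp [gen, PresentedGroup.of]
    rw [map_mul, map_mul, map_mul, map_inv, map_inv, hω'] at this
    have h1 : PresentedGroup.mk (Rels m n) (FreeGroup.of (l : ZMod m)) = gen m n l := rfl
    have h2 : PresentedGroup.mk (Rels m n) (FreeGroup.of ((l : ZMod m) + (n : ZMod m))) =
      gen m n (l + n) := by simp [gen, PresentedGroup.of]
    rw [h1, h2] at this
    rw [mul_inv_eq_one] at this
    rw [← mul_right_inj ((gen m n l)⁻¹ * p n), this]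
    group
  refine ⟨⟨p, ?_, ?_, h0⟩, hp⟩
  · intro l
    have := prods_unique (q := fun l => p (l + m)) hp (by
      intro l
      have e := hp (l + m)
      rw [show l + m - 1 = l - 1 + m by ring] at e
      beta_reduce
      rw [e]
      congr 1
      simp [gen]) l
    simpa [h0] using this
  · intro l
    have := prods_unique (q := fun l => p (l + n) * (p n)⁻¹) hp (by
      intro l
      have e := hp (l + n)
      rw [show l + n - 1 = l - 1 + n by ring, hrel] at e
      beta_reduce
      rw [e]; group) l
    simp only [zero_add, mul_inv_cancel, h0, inv_one, one_mul, mul_one] at this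
    exact mul_inv_eq_iff_eq_mul.1 this

theorem exists_hom {A : Type*} [Group A] {m n : ℕ} (hm : 0 < m) (Q : ℤ → A) (ζ ξ : A)
    (h1 : ∀ l, Q (l - m) = ζ * Q l) (h2 : ∀ l, Q (l + n) = Q l * ξ) :
    ∃ s : PresentedGroup (Rels m n) →* A, ∀ l, s (gen m n l) = (Q (l - 1))⁻¹ * Q l := by
  haveI : NeZero m := ⟨hm.ne'⟩
  let G : ℤ → A := fun l => (Q (l - 1))⁻¹ * Q l
  have hG : ∀ l, G (l - m) = G l := by
    intro l
    simp only [G]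
    rw [show l - m - 1 = l - 1 - m by ring, h1, h1]; group
  have hG' : ∀ l, G (l + n) = ξ⁻¹ * G l * ξ := by
    intro l
    simp only [G]
    rw [show l + n - 1 = l - 1 + n by ring, h2, h2]; group
  have hper : Function.Periodic G (m : ℤ) := by
    intro l
    rw [← hG (l + m)]; simp
  have hval : ∀ l : ℤ, G ((l : ZMod m).val : ℤ) = G l := by
    intro l
    rw [ZMod.val_intCast]
    have := hper.int_mul (l / m) (l % m)
    rw [← this]
    congr 1
    have := Int.emod_add_mul_ediv l m
    simp only [Int.cast_id]
    linarith
  let f : ZMod m → A := fun k => G (k.val : ℤ)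
  have hf : ∀ l : ℤ, f (l : ZMod m) = G l := hval
  have hω : FreeGroup.lift f (((List.range n).map
        (fun i => FreeGroup.of ((i + 1 : ℕ) : ZMod m))).prod) = ξ := by
    have e := prods_nat (g := G) (p := fun l => (Q 0)⁻¹ * Q l) (by simp) (by
      intro l; simp only [G]; group) n
    beta_reduce at e
    rw [map_list_prod, List.map_map]
    have e2 : (List.range n).map (⇑(FreeGroup.lift f) ∘
        (fun i => FreeGroup.of ((i + 1 : ℕ) : ZMod m))) =
        (List.range n).map (fun i => G ((i + 1 : ℕ) : ℤ)) := by
      apply List.map_congr_left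
      intro i _
      simp only [Function.comp, FreeGroup.lift_apply_of]
      rw [← hf]; push_cast; rfl
    rw [e2, ← e]
    have := h2 0
    rw [zero_add] at this
    rw [this]; group
  have hr : ∀ r ∈ Rels m n, FreeGroup.lift f r = 1 := by
    rintro _ ⟨k, rfl⟩
    obtain ⟨l, rfl⟩ := ZMod.intCast_surjective k
    rw [map_mul, map_mul, map_mul, map_inv, map_inv, hω]
    simp only [FreeGroup.lift_apply_of]
    have : f ((l : ZMod m) + (n : ZMod m)) = G (l + n) := by
      rw [← hf]; push_cast; rfl
    rw [this, hf, hG']; group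
  refine ⟨PresentedGroup.toGroup hr, fun l => ?_⟩
  simp only [gen, PresentedGroup.toGroup.of]
  exact hf l

variable {X : Type*} [TopologicalSpace X] {n m : ℕ}

theorem VK.main (hm : 0 < m) (D : VK X n m)
    (cV : PathConnectedSpace (Hat D.K D.V)) (cW : PathConnectedSpace (Hat D.H D.W))
    (cM : ∀ l, PathConnectedSpace (D.MHat l))
    (pV : Hat.Par D.K D.V) (pW : Hat.Par D.H D.W) (w : X) :
    Nonempty (FundamentalGroup X w ≃* PresentedGroup (Rels m n)) := by
  classical
  -- projections from the double lifts
  let jV : ∀ l, D.MHat l → Hat D.K D.V := fun l q => ⟨(q.1.1, q.1.2.2), q.2.1, q.2.2.2.2.1⟩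
  let jW : ∀ l, D.MHat l → Hat D.H D.W := fun l q => ⟨(q.1.1, q.1.2.1), q.2.2.1, q.2.2.2.1⟩
  have hval : ∀ l, Continuous fun q : D.MHat l => q.1 := fun l => continuous_subtype_val
  have cjV : ∀ l, Continuous (jV l) := fun l => by
    refine Continuous.subtype_mk ?_ _
    have := hval l
    fun_prop
  have cjW : ∀ l, Continuous (jW l) := fun l => by
    refine Continuous.subtype_mk ?_ _
    have := hval l
    fun_prop
  have : ∀ l, Nonempty (D.MHat l) := fun l => (cM l).nonempty
  let μ : ∀ l, D.MHat l := fun l => (this l).some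
  -- X is path connected
  have cX : PathConnectedSpace X := by
    let x0 := (μ 0).1.1
    have hj : ∀ z, Joined x0 z := by
      intro z
      rcases D.cov z with h | h
      · have := cV.joined (jV 0 (μ 0)) ⟨(z, Complex.arg (D.K z)), h, Lft.arg (D.hK z h)⟩
        exact this.map Hat.continuous_proj
      · have := cW.joined (jW 0 (μ 0)) ⟨(z, Complex.arg (D.H z)), h, Lft.arg (D.hH z h)⟩
        exact this.map Hat.continuous_proj
    exact ⟨⟨x0⟩, fun x y => (hj x).symm.trans (hj y)⟩
  obtain ⟨J, Jsurj, Juniv⟩ := exists_universal w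
  obtain ⟨P, hP⟩ := exists_Prods m n
  obtain ⟨T, TV, TW⟩ := D.exists_T P
  obtain ⟨θV, ζV, hθV, hζV⟩ := Hat.exists_theta J pV
  obtain ⟨θW, ζW, hθW, hζW⟩ := Hat.exists_theta J pW
  let Q : ℤ → (FundamentalGroup X w)ᵐᵒᵖ := fun l => θV (jV l (μ l)) * (θW (jW l (μ l)))⁻¹
  have hQ : ∀ l (ν : D.MHat l), θV (jV l ν) * (θW (jW l ν))⁻¹ = Q l := by
    intro l ν
    let γ : Path (μ l) ν := PathConnectedSpace.somePath _ _
    simp only [Q]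
    rw [hθV _ _ (γ.map (cjV l)), hθW _ _ (γ.map (cjW l))]
    have : ((γ.map (cjV l)).map Hat.continuous_proj) = ((γ.map (cjW l)).map Hat.continuous_proj) :=
      rfl
    rw [this, mul_inv_rev]
    have e : ∀ a b c : (FundamentalGroup X w)ᵐᵒᵖ, a * b * (b⁻¹ * c) = a * c := by
      intros; group
    exact e _ _ _
  have hQm : ∀ l, Q (l - m) = ζV * Q l := by
    intro l
    let q := μ l
    have hst : Strip n m (l - m) q.1.2.1 (q.1.2.2 + 2 * Real.pi) := by
      simpa using q.2.2.2.2.2.addb 1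
    let ν : D.MHat (l - m) := ⟨(q.1.1, q.1.2.1, q.1.2.2 + 2 * Real.pi), q.2.1, q.2.2.1, q.2.2.2.1,
      q.2.2.2.2.1.add_two_pi, hst⟩
    rw [← hQ _ ν, ← hQ l q]
    have e1 : jV _ ν = (jV l q).shift := rfl
    have e2 : jW _ ν = jW l q := rfl
    rw [e1, e2, hζV, mul_assoc]
  have hQn : ∀ l, Q (l + n) = Q l * ζW⁻¹ := by
    intro l
    let q := μ l
    have hst : Strip n m (l + n) (q.1.2.1 + 2 * Real.pi) q.1.2.2 := by
      simpa using q.2.2.2.2.2.adda 1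
    let ν : D.MHat (l + n) := ⟨(q.1.1, q.1.2.1 + 2 * Real.pi, q.1.2.2), q.2.1, q.2.2.1,
      q.2.2.2.1.add_two_pi, q.2.2.2.2.1, hst⟩
    rw [← hQ _ ν, ← hQ l q]
    have e1 : jV _ ν = jV l q := rfl
    have e2 : jW _ ν = (jW l q).shift := rfl
    rw [e1, e2, hζW]; group
  obtain ⟨s, hs⟩ := exists_hom hm Q ζV ζW⁻¹ hQm hQn
  have hsp : ∀ l, s (P.p l) = (Q 0)⁻¹ * Q l := by
    intro l
    have := prods_unique (g := fun l => (Q (l - 1))⁻¹ * Q l) (p := fun l => (Q 0)⁻¹ * Q l)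
      (q := fun l => s (P.p l)) (by intro l; beta_reduce; group) (by
        intro l
        beta_reduce
        rw [hP, map_mul, hs]) l
    simpa [P.zero] using this
  -- injectivity
  have hinj : Function.Injective s := by
    obtain ⟨τ, c, hτ⟩ := Juniv _ T
    have hc : ∃ d e : PresentedGroup (Rels m n), ∀ l, τ (Q l) = d * P.p l * e := by
      let v := jV 0 (μ 0)
      let w' := jW 0 (μ 0)
      refine ⟨τ (θV v) * c v.1.1 * D.uV P v.1.1 v.1.2,
        (D.uW P w'.1.1 w'.1.2)⁻¹ * (c w'.1.1)⁻¹ * (τ (θW w'))⁻¹, ?_⟩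
      intro l
      let γ : Path v (jV l (μ l)) := PathConnectedSpace.somePath _ _
      let γ' : Path w' (jW l (μ l)) := PathConnectedSpace.somePath _ _
      simp only [Q]
      rw [hθV _ _ γ, hθW _ _ γ']
      rw [map_mul, map_inv, map_mul, map_mul, hτ, hτ, TV, TW]
      have e := D.uVW P (μ l).2.1 (μ l).2.2.1 (μ l).2.2.2.1 (μ l).2.2.2.2.1 (μ l).2.2.2.2.2
      rw [← e]
      have e1 : (jV l (μ l)).1 = ((μ l).1.1, (μ l).1.2.2) := rfl
      have e2 : (jW l (μ l)).1 = ((μ l).1.1, (μ l).1.2.1) := rfl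
      have e3 : Hat.proj (jV l (μ l)) = Hat.proj (jW l (μ l)) := rfl
      rw [e1, e2, e3]
      simp only [Hat.proj]
      group
    obtain ⟨d, e, hde⟩ := hc
    have hconj : ∀ x, τ (s x) = e⁻¹ * x * e := by
      have : τ.comp s = (MulAut.conj e⁻¹).toMonoidHom := by
        apply PresentedGroup.ext
        intro k
        obtain ⟨l, rfl⟩ := ZMod.intCast_surjective k
        change τ (s (gen m n l)) = e⁻¹ * gen m n l * e⁻¹⁻¹
        rw [hs, map_mul, map_inv, hde, hde, hP l]
        group
      intro x
      have := congrArg (fun φ => φ x) this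
      simpa using this
    intro x y hxy
    have := congrArg τ hxy
    rw [hconj, hconj] at this
    simpa using this
  -- surjectivity
  let Θ : X → (FundamentalGroup X w)ᵐᵒᵖ := fun z =>
    if h : z ∈ D.V then (Q 0)⁻¹ * θV ⟨(z, Complex.arg (D.K z)), h, Lft.arg (D.hK z h)⟩
    else if h' : z ∈ D.W then θW ⟨(z, Complex.arg (D.H z)), h', Lft.arg (D.hH z h')⟩ else 1
  have shV : ∀ (q : Hat D.K D.V) (N : ℤ) (h), θV ⟨(q.1.1, q.1.2 + 2 * Real.pi * N), h⟩ =
      ζV ^ N * θV q := by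
    intro q N
    induction N using Int.induction_on with
    | zero =>
      intro h
      simp only [Int.cast_zero, mul_zero, add_zero, zpow_zero, one_mul]
      rfl
    | succ i ih =>
      intro h
      have h' := And.intro q.2.1 (q.2.2.add i)
      have := hζV ⟨(q.1.1, q.1.2 + 2 * Real.pi * (i : ℤ)), h'⟩
      rw [ih h', ← mul_assoc, ← zpow_one_add, add_comm 1] at this
      rw [← this]
      congr 1
      apply Subtype.ext
      simp only [Hat.shift]
      congr 1
      push_cast; ring
    | pred i ih =>
      intro h
      have h' := And.intro q.2.1 (q.2.2.add (-i))
      have := hζV ⟨_, h⟩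
      rw [show (Hat.shift ⟨_, h⟩ : Hat D.K D.V) = ⟨(q.1.1, q.1.2 + 2 * Real.pi * (-i : ℤ)), h'⟩ by
        apply Subtype.ext
        simp only [Hat.shift]
        congr 1
        push_cast; ring, ih h'] at this
      have c1 : Commute ζV (ζV ^ (-i : ℤ)) := (Commute.refl ζV).zpow_right _
      have c2 : ζV ^ (-i - 1 : ℤ) * θV q = ζV⁻¹ * (ζV ^ (-i : ℤ) * θV q) := by
        rw [zpow_sub_one, ← c1.inv_left.eq, mul_assoc]
      rw [c2, this, inv_mul_cancel_left]
  have shW : ∀ (q : Hat D.H D.W) (N : ℤ) (h), θW ⟨(q.1.1, q.1.2 + 2 * Real.pi * N), h⟩ =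
      ζW ^ N * θW q := by
    intro q N
    induction N using Int.induction_on with
    | zero =>
      intro h
      simp only [Int.cast_zero, mul_zero, add_zero, zpow_zero, one_mul]
      rfl
    | succ i ih =>
      intro h
      have h' := And.intro q.2.1 (q.2.2.add i)
      have := hζW ⟨(q.1.1, q.1.2 + 2 * Real.pi * (i : ℤ)), h'⟩
      rw [ih h', ← mul_assoc, ← zpow_one_add, add_comm 1] at this
      rw [← this]
      congr 1
      apply Subtype.ext
      simp only [Hat.shift]
      congr 1
      push_cast; ring
    | pred i ih =>
      intro h
      have h' := And.intro q.2.1 (q.2.2.add (-i))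
      have := hζW ⟨_, h⟩
      rw [show (Hat.shift ⟨_, h⟩ : Hat D.H D.W) = ⟨(q.1.1, q.1.2 + 2 * Real.pi * (-i : ℤ)), h'⟩ by
        apply Subtype.ext
        simp only [Hat.shift]
        congr 1
        push_cast; ring, ih h'] at this
      have c1 : Commute ζW (ζW ^ (-i : ℤ)) := (Commute.refl ζW).zpow_right _
      have c2 : ζW ^ (-i - 1 : ℤ) * θW q = ζW⁻¹ * (ζW ^ (-i : ℤ) * θW q) := by
        rw [zpow_sub_one, ← c1.inv_left.eq, mul_assoc]
      rw [c2, this, inv_mul_cancel_left]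
  have hQmN : ∀ N : ℤ, Q (m * N) = ζV ^ (-N) * Q 0 := by
    intro N
    induction N using Int.induction_on with
    | zero => simp
    | succ i ih =>
      have := hQm (m * (i + 1))
      rw [show (m : ℤ) * (i + 1) - m = m * i by ring, ih] at this
      rw [← inv_mul_eq_iff_eq_mul] at this
      rw [← this, show (-(i + 1) : ℤ) = -1 + -i by ring, zpow_add, zpow_neg_one, mul_assoc]
    | pred i ih =>
      have := hQm (m * (-i))
      rw [show (m : ℤ) * (-i) - m = m * (-i - 1) by ring, ih] at this
      rw [this, show (-(-i - 1) : ℤ) = 1 + -(-i) by ring, zpow_add, zpow_one, mul_assoc]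
  have hQnN : ∀ N : ℤ, Q (n * N) = Q 0 * ζW ^ (-N) := by
    intro N
    induction N using Int.induction_on with
    | zero => simp
    | succ i ih =>
      have := hQn (n * i)
      rw [show (n : ℤ) * i + n = n * (i + 1) by ring, ih] at this
      rw [this, show (-(i + 1) : ℤ) = -i + -1 by ring, zpow_add, zpow_neg_one, mul_assoc]
    | pred i ih =>
      have := hQn (n * (-i - 1))
      rw [show (n : ℤ) * (-i - 1) + n = n * -i by ring, ih] at this
      rw [eq_mul_inv_iff_mul_eq] at this
      rw [← this, show (-(-i - 1) : ℤ) = -(-i) + 1 by ring, zpow_add, zpow_one, mul_assoc]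
  have ΘV : ∀ q : Hat D.K D.V, (Q 0)⁻¹ * θV q = (s (D.uV P q.1.1 q.1.2))⁻¹ * Θ q.1.1 := by
    rintro ⟨⟨z, b⟩, hz, hb⟩
    obtain ⟨N, rfl⟩ := (Lft.arg (D.hK z hz)).exists_int hb
    have := shV ⟨(z, Complex.arg (D.K z)), hz, Lft.arg (D.hK z hz)⟩ N ⟨hz, hb⟩
    rw [this]
    simp only [Θ, dif_pos hz]
    rw [D.uV_eq, hsp, hQmN]
    rw [zpow_neg]; group
  have ΘW : ∀ q : Hat D.H D.W, θW q = (s (D.uW P q.1.1 q.1.2))⁻¹ * Θ q.1.1 := by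
    rintro ⟨⟨z, a⟩, hz, ha⟩
    by_cases h : z ∈ D.V
    · have hb := Lft.arg (D.hK z h)
      have h1 := D.exists_strip h hz ha hb
      have h2 := hQ _ ⟨(z, a, Complex.arg (D.K z)), h, hz, ha, hb, h1⟩
      simp only [Θ, dif_pos h]
      rw [D.uW_eq' P h hz ha h1, hsp]
      rw [mul_inv_eq_iff_eq_mul] at h2
      have e1 : jV _ ⟨(z, a, Complex.arg (D.K z)), h, hz, ha, hb, h1⟩ = ⟨(z, Complex.arg (D.K z)), h, hb⟩ := rfl
      have e2 : jW _ ⟨(z, a, Complex.arg (D.K z)), h, hz, ha, hb, h1⟩ = ⟨(z, a), hz, ha⟩ := rfl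
      rw [e1, e2] at h2
      rw [h2]; group
    · obtain ⟨N, rfl⟩ := (Lft.arg (D.hH z hz)).exists_int ha
      have := shW ⟨(z, Complex.arg (D.H z)), hz, Lft.arg (D.hH z hz)⟩ N ⟨hz, ha⟩
      rw [this]
      simp only [Θ, dif_neg h, dif_pos hz]
      rw [D.uW_eq P h, hsp, hQnN]
      rw [zpow_neg]; group
  let J' : PathFun X (FundamentalGroup X w)ᵐᵒᵖ :=
    { f := fun {x y} γ => (Θ x)⁻¹ * s (T.f γ) * Θ y
      hom := fun γ γ' h => by rw [T.hom γ γ' h]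
      trans := fun γ γ' => by rw [T.trans, map_mul]; group }
  have hJJ : ∀ {x y : X} (γ : Path x y), J.f γ = J'.f γ := by
    intro x y γ
    refine J.ext_of_local J' ?_ γ
    intro z
    rcases D.cov z with h | h
    · obtain ⟨U, b, h1, h2, h3, h4, h5⟩ := exists_local_arg D.cK D.oV D.hK h
      refine ⟨U, h1, h2, ?_⟩
      intro x y γ hγ
      have hx : x ∈ U := hγ ⟨0, by simp⟩
      have hy : y ∈ U := hγ ⟨1, by simp⟩
      obtain ⟨γ', hγ'⟩ := Hat.exists_path h3 h4 h5 γ hγ hx hy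
      have a1 : θV ⟨(y, b y), h3 hy, h5 y hy⟩ = θV ⟨(x, b x), h3 hx, h5 x hx⟩ * J.f γ := by
        rw [← hγ']; exact hθV _ _ γ'
      have a2 : T.f γ = D.uV P x (b x) * (D.uV P y (b y))⁻¹ := by
        rw [← hγ']; exact TV _ _ γ'
      have a3 := ΘV ⟨(x, b x), h3 hx, h5 x hx⟩
      have a4 := ΘV ⟨(y, b y), h3 hy, h5 y hy⟩
      change J.f γ = (Θ x)⁻¹ * s (T.f γ) * Θ y
      rw [a2]
      simp only at a3 a4 ⊢
      rw [a1] at a4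
      rw [map_mul, map_inv]
      rw [inv_mul_eq_iff_eq_mul] at a3
      rw [a3] at a4
      rw [mul_assoc, mul_assoc (s _), ← a4]
      group
    · obtain ⟨U, b, h1, h2, h3, h4, h5⟩ := exists_local_arg D.cH D.oW D.hH h
      refine ⟨U, h1, h2, ?_⟩
      intro x y γ hγ
      have hx : x ∈ U := hγ ⟨0, by simp⟩
      have hy : y ∈ U := hγ ⟨1, by simp⟩
      obtain ⟨γ', hγ'⟩ := Hat.exists_path h3 h4 h5 γ hγ hx hy
      have a1 : θW ⟨(y, b y), h3 hy, h5 y hy⟩ = θW ⟨(x, b x), h3 hx, h5 x hx⟩ * J.f γ := by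
        rw [← hγ']; exact hθW _ _ γ'
      have a2 : T.f γ = D.uW P x (b x) * (D.uW P y (b y))⁻¹ := by
        rw [← hγ']; exact TW _ _ γ'
      have a3 := ΘW ⟨(x, b x), h3 hx, h5 x hx⟩
      have a4 := ΘW ⟨(y, b y), h3 hy, h5 y hy⟩
      change J.f γ = (Θ x)⁻¹ * s (T.f γ) * Θ y
      rw [a2]
      simp only at a3 a4 ⊢
      rw [a1, a3] at a4
      rw [map_mul, map_inv]
      rw [mul_assoc, mul_assoc (s _), ← a4]
      group
  have hsurj : Function.Surjective s := by
    intro a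
    obtain ⟨γ, hγ⟩ := Jsurj ((Θ w)⁻¹ * a * Θ w)
    rw [hJJ] at hγ
    refine ⟨T.f γ, ?_⟩
    change (Θ w)⁻¹ * s (T.f γ) * Θ w = _ at hγ
    simpa using hγ
  let E : PresentedGroup (Rels m n) ≃* (FundamentalGroup X w)ᵐᵒᵖ :=
    MulEquiv.ofBijective s ⟨hinj, hsurj⟩
  exact ⟨(MulEquiv.inv' (FundamentalGroup X w)).trans E.symm⟩

end Arr


namespace Arr

/-! ### Lifting homotopies through partial coverings -/

theorem push {E B A : Type*} [TopologicalSpace E] [TopologicalSpace B] [TopologicalSpace A]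
    {p : E → B} {S : Set B} (cov : IsCoveringMapOn p S) {H : I × A → B} (hH : Continuous H)
    (hS : ∀ q, H q ∈ S) {f : A → E} (hf : Continuous f) (h0 : ∀ a, H (0, a) = p (f a)) :
    ∃ R : I × A → E, Continuous R ∧ (∀ q, p (R q) = H q) ∧ (∀ a, R (0, a) = f a) ∧
      ∀ a, (∀ t, H (t, a) = p (f a)) → ∀ t, R (t, a) = f a := by
  have c := cov.isCoveringMap_restrictPreimage
  let H' : C(I × A, S) := ⟨fun q => ⟨H q, hS q⟩, hH.subtype_mk _⟩
  have hfS : ∀ a, f a ∈ p ⁻¹' S := fun a => by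
    have := hS (0, a); rw [h0] at this; exact this
  let f' : C(A, p ⁻¹' S) := ⟨fun a => ⟨f a, hfS a⟩, hf.subtype_mk hfS⟩
  have H0 : ∀ a, H' (0, a) = S.restrictPreimage p (f' a) := fun a => Subtype.ext (h0 a)
  let L := c.liftHomotopy H' f' H0
  have hL : ∀ q, S.restrictPreimage p (L q) = H' q := fun q =>
    congrFun (c.liftHomotopy_lifts H' f' H0) q
  have hL0 : ∀ a, L (0, a) = f' a := c.liftHomotopy_zero H' f' H0
  refine ⟨fun q => (L q).1, continuous_subtype_val.comp L.continuous, fun q => ?_, fun a => ?_, ?_⟩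
  · exact congrArg Subtype.val (hL q)
  · beta_reduce; rw [hL0]; rfl
  · intro a ha t
    have hc : Continuous fun t : I => L (t, a) := by fun_prop
    have h1 : ∀ t t', L (t, a) = L (t', a) := by
      intro t t'
      refine c.const_of_comp (A := I) hc ?_ t t'
      intro t t'
      apply Subtype.ext
      have e1 := congrArg Subtype.val (hL (t, a))
      have e2 := congrArg Subtype.val (hL (t', a))
      refine e1.trans (Eq.trans ?_ e2.symm)
      exact (ha t).trans (ha t').symm
    beta_reduce; rw [h1 t 0, hL0]; rfl

theorem push_paste {E B A : Type*} [TopologicalSpace E] [TopologicalSpace B] [TopologicalSpace A]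
    {p : E → B} {S : Set B} (cov : IsCoveringMapOn p S) {H : I × A → B} (hH : Continuous H)
    {f : A → E} (hf : Continuous f) (h0 : ∀ a, H (0, a) = p (f a))
    {A1 A2 : Set A} (c1 : IsClosed A1) (c2 : IsClosed A2) (hA : ∀ a, a ∈ A1 ∨ a ∈ A2)
    (h1 : ∀ t, ∀ a ∈ A1, H (t, a) ∈ S) (h2 : ∀ t, ∀ a ∈ A2, H (t, a) = p (f a)) :
    ∃ R : I × A → E, Continuous R ∧ (∀ q, p (R q) = H q) ∧ (∀ a, R (0, a) = f a) ∧
      ∀ a ∈ A2, ∀ t, R (t, a) = f a := by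
  classical
  obtain ⟨R, r1, r2, r3, r4⟩ := push (A := A1) cov (H := fun q => H (q.1, q.2.1)) (by fun_prop)
    (fun q => h1 _ _ q.2.2) (f := fun a => f a.1) (by fun_prop) (fun a => h0 a.1)
  let Q : I × A → E := fun q => if h : q.2 ∈ A1 then R (q.1, ⟨q.2, h⟩) else f q.2
  have q2 : ∀ a ∈ A2, ∀ t, Q (t, a) = f a := by
    intro a ha t
    by_cases h : a ∈ A1
    · simp only [Q, dif_pos h]
      exact r4 ⟨a, h⟩ (fun t => h2 t a ha) t
    · simp only [Q, dif_neg h]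
  refine ⟨Q, ?_, ?_, ?_, q2⟩
  · have k1 : ContinuousOn Q (Prod.snd ⁻¹' A1) := by
      rw [continuousOn_iff_continuous_restrict]
      have : (Prod.snd ⁻¹' A1).domRestrict Q = fun q => R (q.1.1, ⟨q.1.2, q.2⟩) := by
        funext q
        have := q.2
        simp only [mem_preimage] at this
        change (if h : q.1.2 ∈ A1 then R (q.1.1, ⟨q.1.2, h⟩) else f q.1.2) = _
        rw [dif_pos this]
      rw [this]
      refine r1.comp ?_
      exact Continuous.prodMk (by fun_prop) (Continuous.subtype_mk (by fun_prop) _)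
    have k2 : ContinuousOn Q (Prod.snd ⁻¹' A2) := by
      refine ContinuousOn.congr (f := fun q => f q.2) (by fun_prop) ?_
      rintro ⟨t, a⟩ ha
      exact q2 a ha t
    have := k1.union_of_isClosed k2 (c1.preimage continuous_snd) (c2.preimage continuous_snd)
    rw [← continuousOn_univ]
    convert this using 1
    ext q
    simpa using hA q.2
  · rintro ⟨t, a⟩
    by_cases h : a ∈ A1
    · simp only [Q, dif_pos h]; exact r2 (t, ⟨a, h⟩)
    · simp only [Q, dif_neg h]
      exact (h2 t a ((hA a).resolve_left h)).symm
  · intro a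
    by_cases h : a ∈ A1
    · simp only [Q, dif_pos h]; exact r3 ⟨a, h⟩
    · simp only [Q, dif_neg h]

/-! ### More on arguments -/

theorem lft_iff {w : ℂ} {b : ℝ} : Lft w b ↔ ∃ r : ℝ, 0 < r ∧ w = r * Complex.exp (b * Complex.I) := by
  constructor
  · rintro ⟨h1, h2⟩
    exact ⟨‖w‖, norm_pos_iff.2 h1, h2⟩
  · rintro ⟨r, hr, rfl⟩
    refine ⟨mul_ne_zero (by exact_mod_cast hr.ne') (Complex.exp_ne_zero _), ?_⟩
    rw [norm_mul, Complex.norm_exp_ofReal_mul_I, Complex.norm_real, Real.norm_of_nonneg hr.le, mul_one]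

theorem Lft.pow {w : ℂ} {b : ℝ} (h : Lft w b) (m : ℕ) : Lft (w ^ m) (m * b) := by
  obtain ⟨r, hr, rfl⟩ := lft_iff.1 h
  refine lft_iff.2 ⟨r ^ m, by positivity, ?_⟩
  rw [mul_pow, ← Complex.exp_nat_mul]
  push_cast; ring_nf

theorem Lft.mul {w w' : ℂ} {b b' : ℝ} (h : Lft w b) (h' : Lft w' b') : Lft (w * w') (b + b') := by
  obtain ⟨r, hr, rfl⟩ := lft_iff.1 h
  obtain ⟨r', hr', rfl⟩ := lft_iff.1 h'
  refine lft_iff.2 ⟨r * r', by positivity, ?_⟩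
  push_cast
  rw [add_mul, Complex.exp_add]; ring

theorem Lft.smul {w : ℂ} {b : ℝ} (h : Lft w b) {c : ℝ} (hc : 0 < c) : Lft (c * w) b := by
  obtain ⟨r, hr, rfl⟩ := lft_iff.1 h
  refine lft_iff.2 ⟨c * r, by positivity, ?_⟩
  push_cast; ring

theorem lft_exp (b : ℝ) : Lft (Complex.exp (b * Complex.I)) b :=
  lft_iff.2 ⟨1, one_pos, by simp⟩

/-- A continuous root with prescribed argument of its power has the expected argument. -/
theorem lft_rigid {A : Type*} [TopologicalSpace A] [PreconnectedSpace A] {κ : A → ℂ} {β : A → ℝ}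
    (hκ : Continuous κ) (hβ : Continuous β) {m : ℕ} (hm : 0 < m)
    (h : ∀ a, Lft (κ a ^ m) (m * β a)) {a0 : A} (h0 : Lft (κ a0) (β a0)) (a : A) :
    Lft (κ a) (β a) := by
  have hne : ∀ a, κ a ≠ 0 := fun a e => (h a).1 (by rw [e, zero_pow hm.ne'])
  let u : A → ℂ := fun a => κ a / ‖κ a‖ * Complex.exp (-(β a * Complex.I))
  have hu : Continuous u := by
    refine Continuous.mul (hκ.div (by fun_prop) ?_) (by fun_prop)
    intro a; simpa using hne a
  have hu1 : ∀ a, u a ^ m = 1 := by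
    intro a
    have e := (h a).2
    have hn : (‖κ a‖ : ℂ) ≠ 0 := by simpa using hne a
    simp only [u]
    rw [mul_pow, div_pow, e, ← Complex.exp_nat_mul, norm_pow]
    push_cast
    rw [mul_div_cancel_left₀ _ (pow_ne_zero _ hn), ← Complex.exp_add]
    rw [show (m : ℂ) * β a * Complex.I + m * -(β a * Complex.I) = 0 by ring, Complex.exp_zero]
  have hfin : (range u).Finite := by
    refine Set.Finite.subset (s := {z : ℂ | z ^ m = 1}) ?_ ?_
    · have : {z : ℂ | z ^ m = 1} = ((Polynomial.nthRoots m (1 : ℂ)).toFinset : Set ℂ) := by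
        ext z
        simp [Polynomial.mem_nthRoots hm]
      rw [this]; exact Finset.finite_toSet _
    · rintro _ ⟨a, rfl⟩; exact hu1 a
  have hsub : (range u).Subsingleton := by
    have := isPreconnected_range hu
    by_contra hns
    rw [Set.not_subsingleton_iff] at hns
    exact (this.infinite_of_nontrivial hns) hfin
  have hall : ∀ a, u a = 1 → Lft (κ a) (β a) := by
    intro a ha
    refine ⟨hne a, ?_⟩
    have hn : (‖κ a‖ : ℂ) ≠ 0 := by simpa using hne a
    simp only [u] at ha
    rw [Complex.exp_neg] at ha
    field_simp at ha
    exact ha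
  apply hall
  rw [hsub ⟨a, rfl⟩ ⟨a0, rfl⟩]
  simp only [u]
  have hn : (‖κ a0‖ : ℂ) ≠ 0 := by simpa using hne a0
  rw [Complex.exp_neg]
  field_simp
  exact h0.2

end Arr


namespace Arr

/-- One of the two functions, with its root and its nonzero critical values. -/
structure Side (n : ℕ) where
  G : ℂ → ℂ
  h : ℂ → ℂ
  C : Set ℂ
  hn : 0 < n
  hc : Continuous h
  hG : ∀ x, G x = h x ^ n
  fin : C.Finite
  zero : (0 : ℂ) ∉ C
  cov : IsCoveringMapOn G (C ∪ {0})ᶜ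
  surj : Function.Surjective G
  op : IsOpenMap G
  conn : PathConnectedSpace {q : ℂ × ℝ // Lft (h q.1) q.2}

theorem Side.cG {n : ℕ} (D : Side n) : Continuous D.G := by
  have : D.G = fun x => D.h x ^ n := funext D.hG
  rw [this]; exact D.hc.pow n

theorem Side.h_ne {n : ℕ} (D : Side n) {x : ℂ} : D.h x ≠ 0 ↔ D.G x ≠ 0 := by
  rw [D.hG, ne_eq, ne_eq, pow_eq_zero_iff D.hn.ne']

/-- A homogeneous gauge separating two finite sets. -/
structure StarNorm (A B : Set ℂ) where
  N : ℂ → ℝ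
  cont : Continuous N
  smul : ∀ (t : ℝ) (u : ℂ), 0 ≤ t → N (t * u) = t * N u
  pos : ∀ u, u ≠ 0 → 0 < N u
  lt : ∀ a ∈ A, N a < 1
  gt : ∀ b ∈ B, 2 < N b

theorem StarNorm.zero {A B : Set ℂ} (S : StarNorm A B) : S.N 0 = 0 := by
  have := S.smul 0 0 le_rfl
  simpa using this

theorem StarNorm.nonneg {A B : Set ℂ} (S : StarNorm A B) (u : ℂ) : 0 ≤ S.N u := by
  rcases eq_or_ne u 0 with rfl | h
  · rw [S.zero]
  · exact (S.pos u h).le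

/-- smaller gauge implies the quotient is not in `[1,∞)` -/
theorem StarNorm.not_ray {A B : Set ℂ} (S : StarNorm A B) {u v : ℂ} (h : S.N u < S.N v)
    (t : ℝ) (ht : 1 ≤ t) : u ≠ t * v := by
  rintro rfl
  rw [S.smul t v (by linarith)] at h
  have := S.nonneg v
  nlinarith

theorem Side.exists_in {n : ℕ} (D : Side n) {B : Set ℂ} (S : StarNorm D.C B) :
    ∃ R : I × ℂ → ℂ, Continuous R ∧ (∀ x, R (0, x) = x) ∧
      (∀ q, ∃ c : ℝ, 0 < c ∧ c ≤ 1 ∧ D.G (R q) = c * D.G q.2) ∧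
      (∀ x, S.N (D.G (R (1, x))) ≤ 1) ∧ ∀ x, S.N (D.G x) ≤ 1 → ∀ t, R (t, x) = x := by
  have cG := D.cG
  have cN := S.cont
  let c : I × ℂ → ℝ := fun q => 1 - q.1 + q.1 / max 1 (S.N (D.G q.2))
  have hmax : ∀ x, (1 : ℝ) ≤ max 1 (S.N (D.G x)) := fun x => le_max_left _ _
  have cc : Continuous c := by
    have : ∀ q : I × ℂ, max 1 (S.N (D.G q.2)) ≠ 0 := fun q => by
      have := hmax q.2; intro h; linarith
    exact Continuous.add (by fun_prop) (Continuous.div (by fun_prop) (by fun_prop) this)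
  have c0 : ∀ q, 0 < c q := by
    intro q
    have h1 := hmax q.2
    have h2 := q.1.2.1
    have h3 := q.1.2.2
    simp only [c]
    rcases eq_or_lt_of_le h2 with h | h
    · rw [← h]; simp
    · have : 0 < (q.1 : ℝ) / max 1 (S.N (D.G q.2)) := by positivity
      linarith
  have c1 : ∀ q, c q ≤ 1 := by
    intro q
    have h1 := hmax q.2
    have h2 := q.1.2.1
    have : (q.1 : ℝ) / max 1 (S.N (D.G q.2)) ≤ q.1 := div_le_self h2 h1
    simp only [c]
    linarith
  obtain ⟨R, r1, r2, r3, r4⟩ := push_paste (A := ℂ) D.cov (H := fun q => c q * D.G q.2)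
    (by fun_prop) (f := id) continuous_id (by intro x; simp [c])
    (A1 := {x | 1 ≤ S.N (D.G x)}) (A2 := {x | S.N (D.G x) ≤ 1})
    (isClosed_le (by fun_prop) (by fun_prop)) (isClosed_le (by fun_prop) (by fun_prop))
    (fun x => le_total 1 (S.N (D.G x))) (by
      intro t x hx
      have hx : 1 ≤ S.N (D.G x) := hx
      have h1 : S.N (c (t, x) * D.G x) = c (t, x) * S.N (D.G x) := S.smul _ _ (c0 _).le
      have h2 : 1 ≤ c (t, x) * S.N (D.G x) := by
        simp only [c]
        rw [max_eq_right hx]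
        have h3 := t.2.1
        have h4 := t.2.2
        have h5 : (t : ℝ) / S.N (D.G x) * S.N (D.G x) = t := by
          field_simp
        nlinarith
      rw [← h1] at h2
      rintro (h | h)
      · have := S.lt _ h; linarith
      · have : (c (t, x) : ℂ) * D.G x = 0 := h
        rw [this, S.zero] at h2; linarith) (by
      intro t x hx
      have hx : S.N (D.G x) ≤ 1 := hx
      simp only [c]
      rw [max_eq_left hx]; simp)
  refine ⟨R, r1, r3, fun q => ⟨c q, c0 q, c1 q, r2 q⟩, ?_, fun x hx t => r4 x hx t⟩
  intro x
  rw [r2, S.smul _ _ (c0 _).le]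
  simp only [c]
  have h1 := hmax x
  have h2 := le_max_right 1 (S.N (D.G x))
  simp only [Icc.coe_one, sub_self, zero_add]
  rw [one_div, inv_mul_le_iff₀ (by linarith)]
  linarith

theorem Side.exists_out {n : ℕ} (D : Side n) {A : Set ℂ} (S : StarNorm A D.C) :
    ∃ R : I × {y // D.G y ≠ 0} → ℂ, Continuous R ∧ (∀ y, R (0, y) = y.1) ∧
      (∀ q, ∃ c : ℝ, 1 ≤ c ∧ D.G (R q) = c * D.G q.2.1) ∧
      (∀ y, 2 ≤ S.N (D.G (R (1, y)))) := by
  have cG := D.cG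
  have cN := S.cont
  let c : I × {y // D.G y ≠ 0} → ℝ := fun q => 1 - q.1 + q.1 * max 1 (2 / S.N (D.G q.2.1))
  have hN : ∀ y : {y // D.G y ≠ 0}, 0 < S.N (D.G y.1) := fun y => S.pos _ y.2
  have cc : Continuous c := by
    have : Continuous fun q : I × {y // D.G y ≠ 0} => 2 / S.N (D.G q.2.1) :=
      Continuous.div (by fun_prop) (by fun_prop) (fun q => (hN q.2).ne')
    fun_prop
  have c1 : ∀ q, 1 ≤ c q := by
    intro q
    have h1 := le_max_left 1 (2 / S.N (D.G q.2.1))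
    have h2 := q.1.2.1
    simp only [c]
    nlinarith
  obtain ⟨R, r1, r2, r3, r4⟩ := push_paste (A := {y // D.G y ≠ 0}) D.cov
    (H := fun q => c q * D.G q.2.1)
    (by fun_prop) (f := fun y => y.1) continuous_subtype_val (by intro x; simp [c])
    (A1 := {y | S.N (D.G y.1) ≤ 2}) (A2 := {y | 2 ≤ S.N (D.G y.1)})
    (isClosed_le (by fun_prop) (by fun_prop)) (isClosed_le (by fun_prop) (by fun_prop))
    (fun x => le_total (S.N (D.G x.1)) 2) (by
      intro t y hx
      have hx : S.N (D.G y.1) ≤ 2 := hx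
      have h0 := c1 (t, y)
      have h1 : S.N (c (t, y) * D.G y.1) = c (t, y) * S.N (D.G y.1) := S.smul _ _ (by linarith)
      have h2 : c (t, y) * S.N (D.G y.1) ≤ 2 := by
        have h6 := hN y
        simp only [c]
        rw [max_eq_right (by rw [le_div_iff₀ h6]; linarith)]
        have h3 := t.2.1
        have h4 := t.2.2
        have h5 : (t : ℝ) * (2 / S.N (D.G y.1)) * S.N (D.G y.1) = 2 * t := by
          field_simp
        nlinarith
      rw [← h1] at h2
      rintro (h | h)
      · have := S.gt _ h; linarith
      · have h : (c (t, y) : ℂ) * D.G y.1 = 0 := h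
        refine (mul_ne_zero ?_ y.2) h
        have : c (t, y) ≠ 0 := by linarith
        exact_mod_cast this) (by
      intro t y hx
      have hx : 2 ≤ S.N (D.G y.1) := hx
      simp only [c]
      rw [max_eq_left (by rw [div_le_one (hN y)]; exact hx)]; simp)
  refine ⟨R, r1, r3, fun q => ⟨c q, c1 q, r2 q⟩, ?_⟩
  intro y
  have h0 := c1 (1, y)
  rw [r2, S.smul _ _ (by linarith)]
  simp only [c]
  have h1 := hN y
  have h2 := le_max_right 1 (2 / S.N (D.G y.1))
  simp only [Icc.coe_one, sub_self, zero_add, one_mul]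
  have h5 : (2 / S.N (D.G y.1)) * S.N (D.G y.1) = 2 := by
    field_simp
  nlinarith

/-- polar coordinates upstairs -/
theorem Side.exists_polar {n : ℕ} (D : Side n) {B : Set ℂ} (S : StarNorm D.C B) :
    ∃ Ξ : ℝ → ℝ → ℂ, Continuous (fun q : ℝ × ℝ => Ξ q.1 q.2) ∧
      (∀ θ ρ, 1 ≤ ρ → S.N (D.G (Ξ θ ρ)) = ρ) ∧ (∀ θ ρ, 1 ≤ ρ → Lft (D.G (Ξ θ ρ)) θ) := by
  have cN := S.cont
  let w : ℝ → ℝ → ℂ := fun θ ρ =>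
    ((max 1 ρ / S.N (Complex.exp (θ * Complex.I)) : ℝ) : ℂ) * Complex.exp (θ * Complex.I)
  have hN : ∀ θ : ℝ, 0 < S.N (Complex.exp (θ * Complex.I)) := fun θ =>
    S.pos _ (Complex.exp_ne_zero _)
  have hmax : ∀ ρ : ℝ, (1 : ℝ) ≤ max 1 ρ := fun ρ => le_max_left _ _
  have cw : Continuous fun q : ℝ × ℝ => w q.1 q.2 := by
    have : Continuous fun q : ℝ × ℝ => max 1 q.2 / S.N (Complex.exp (q.1 * Complex.I)) :=
      Continuous.div (by fun_prop) (by fun_prop) (fun q => (hN _).ne')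
    fun_prop
  have hw : ∀ θ ρ : ℝ, 0 < max 1 ρ / S.N (Complex.exp (θ * Complex.I)) := fun θ ρ => by
    have := hN θ
    have := hmax ρ
    positivity
  have Nw : ∀ θ ρ, S.N (w θ ρ) = max 1 ρ := by
    intro θ ρ
    simp only [w]
    rw [S.smul _ _ (hw θ ρ).le]
    have := (hN θ).ne'
    field_simp
  obtain ⟨x, hx⟩ := D.surj (w 0 1)
  obtain ⟨R, r1, r2, r3, r4⟩ := push (A := ℝ × ℝ) D.cov
    (H := fun q => w (q.1 * q.2.1) (1 + q.1 * (q.2.2 - 1)))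
    (cw.comp (f := fun q : I × (ℝ × ℝ) => ((q.1 * q.2.1 : ℝ), (1 + q.1 * (q.2.2 - 1) : ℝ)))
      (by fun_prop))
    (by
      intro q h
      have e := Nw (q.1 * q.2.1) (1 + q.1 * (q.2.2 - 1))
      have := hmax (1 + q.1 * (q.2.2 - 1))
      rcases h with h | h
      · have := S.lt _ h; linarith
      · have h : w (q.1 * q.2.1) (1 + q.1 * (q.2.2 - 1)) = 0 := h
        rw [h, S.zero] at e; linarith)
    (f := fun _ => x) continuous_const (by intro a; rw [hx]; simp)
  have e : ∀ θ ρ, D.G (R (1, (θ, ρ))) = w θ ρ := by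
    intro θ ρ
    rw [r2]; simp
  refine ⟨fun θ ρ => R (1, (θ, ρ)), by fun_prop, ?_, ?_⟩
  · intro θ ρ h
    rw [e, Nw, max_eq_right h]
  · intro θ ρ h
    rw [e]
    exact (lft_exp θ).smul (hw θ ρ)

end Arr


namespace Arr

/-- concrete model of the hat space -/
def Tsp {n m : ℕ} (A : Side n) (B : Side m) : Type :=
  {q : (ℂ × ℂ) × ℝ // B.G q.1.2 ≠ 0 ∧ (∀ t : ℝ, 1 ≤ t → A.G q.1.1 ≠ t * B.G q.1.2) ∧
    Lft (B.h q.1.2) q.2}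

noncomputable instance {n m : ℕ} (A : Side n) (B : Side m) : TopologicalSpace (Tsp A B) :=
  instTopologicalSpaceSubtype

/-- the two coordinate complement -/
def Ysp {n m : ℕ} (A : Side n) (B : Side m) : Type := {q : ℂ × ℂ // A.G q.1 ≠ B.G q.2}

noncomputable instance {n m : ℕ} (A : Side n) (B : Side m) : TopologicalSpace (Ysp A B) :=
  instTopologicalSpaceSubtype

theorem joined_of {T : Type*} [TopologicalSpace T] (f : I → T) (hf : Continuous f) :
    Joined (f 0) (f 1) := ⟨{ toFun := f, continuous_toFun := hf, source' := rfl, target' := rfl }⟩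

section
variable {n m : ℕ} (A : Side n) (B : Side m)

theorem Tsp.lftF (q : Tsp A B) : Lft (B.G q.1.1.2) (m * q.1.2) := by
  rw [B.hG]; exact q.2.2.2.pow m

theorem Tsp.pathConnected (S : StarNorm A.C B.C) : PathConnectedSpace (Tsp A B) := by
  obtain ⟨R, cR, R0, Rc, R1, Rfix⟩ := A.exists_in S
  obtain ⟨O, cO, O0, Oc, O1⟩ := B.exists_out S
  obtain ⟨Ξ, cΞ, ΞN, Ξl⟩ := A.exists_polar S
  have := B.conn
  have Olft : ∀ (y : {y // B.G y ≠ 0}) (b : ℝ), Lft (B.h y.1) b → ∀ s, Lft (B.h (O (s, y))) b := by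
    intro y b hb s
    refine lft_rigid (κ := fun s : I => B.h (O (s, y))) (β := fun _ => b)
      (B.hc.comp (by fun_prop)) continuous_const B.hn (a0 := 0) ?_ ?_ s
    · intro s
      rw [← B.hG]
      obtain ⟨c, hc, e⟩ := Oc (s, y)
      rw [e]
      refine Lft.smul ?_ (by linarith)
      beta_reduce
      rw [B.hG]; exact hb.pow m
    · beta_reduce; rw [O0]; exact hb
  have One : ∀ q, B.G (O q) ≠ 0 := by
    intro q
    obtain ⟨c, hc, e⟩ := Oc q
    rw [e]
    have : (c : ℂ) ≠ 0 := by
      intro h; have : c = 0 := by exact_mod_cast h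
      linarith
    exact mul_ne_zero this q.2.2
  let P := {q : ℂ × ℝ // Lft (B.h q.1) q.2}
  let toY : P → {y // B.G y ≠ 0} := fun p => ⟨p.1.1, B.h_ne.1 p.2.1⟩
  have ctoY : Continuous toY := by
    refine Continuous.subtype_mk ?_ _
    fun_prop
  have hx1 : S.N (A.G (Ξ 0 1)) = 1 := ΞN 0 1 le_rfl
  let J : P → Tsp A B := fun p => ⟨((Ξ 0 1, O (1, toY p)), p.1.2), One _, fun t ht =>
    S.not_ray (by rw [hx1]; linarith [O1 (toY p)]) t ht, Olft _ _ p.2 _⟩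
  have cJ : Continuous J := by
    refine Continuous.subtype_mk ?_ _
    fun_prop
  have key : ∀ (q : Tsp A B), Joined q (J ⟨(q.1.1.2, q.1.2), q.2.2.2⟩) := by
    intro q
    let y : {y // B.G y ≠ 0} := ⟨q.1.1.2, q.2.1⟩
    have j1 := joined_of (T := Tsp A B) (fun s : I => ⟨((R (s, q.1.1.1), O (s, y)), q.1.2), One _,
      (by
        intro t ht e
        obtain ⟨c, hc, hc1, e1⟩ := Rc (s, q.1.1.1)
        obtain ⟨c', hc', e2⟩ := Oc (s, y)
        have e : A.G (R (s, q.1.1.1)) = t * B.G (O (s, y)) := e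
        rw [e1, e2] at e
        have hcc : (c : ℂ) ≠ 0 := by exact_mod_cast hc.ne'
        refine q.2.2.1 (t * c' / c) ?_ ?_
        · rw [le_div_iff₀ hc]; nlinarith
        · push_cast
          field_simp
          linear_combination e), Olft y _ q.2.2.2 _⟩) (by
        refine Continuous.subtype_mk ?_ _
        fun_prop)
    have j2 := joined_of (T := Tsp A B) (fun s : I => ⟨((R (1, (1 - (s : ℂ)) * q.1.1.1 + s * Ξ 0 1),
      O (1, y)), q.1.2), One _, (fun t ht => S.not_ray (by
        have := R1 ((1 - (s : ℂ)) * q.1.1.1 + s * Ξ 0 1)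
        linarith [O1 y]) t ht), Olft y _ q.2.2.2 _⟩) (by
        refine Continuous.subtype_mk ?_ _
        have : Continuous fun s : I => (((s : ℝ) : ℂ)) := by fun_prop
        fun_prop)
    have e0 : ∀ h, (⟨((R (0, q.1.1.1), O (0, y)), q.1.2), h⟩ : Tsp A B) = q := by
      intro h
      apply Subtype.ext
      simp only [R0, O0, y]
    rw [e0] at j1
    refine j1.trans ?_
    have e1 : ∀ h h', (⟨((R (1, (1 - ((0 : I) : ℂ)) * q.1.1.1 + ((0 : I) : ℂ) * Ξ 0 1),
        O (1, y)), q.1.2), h⟩ : Tsp A B) = ⟨((R (1, q.1.1.1), O (1, y)), q.1.2), h'⟩ := by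
      intro h h'
      apply Subtype.ext; simp
    have e2 : ∀ h, (⟨((R (1, (1 - ((1 : I) : ℂ)) * q.1.1.1 + ((1 : I) : ℂ) * Ξ 0 1),
        O (1, y)), q.1.2), h⟩ : Tsp A B) = J ⟨(q.1.1.2, q.1.2), q.2.2.2⟩ := by
      intro h
      apply Subtype.ext; simp [J, toY, y, Rfix _ hx1.le]
    rw [e1, e2] at j2
    exact j2
  constructor
  · obtain ⟨p⟩ := this.nonempty
    exact ⟨J p⟩
  · intro q q'
    refine (key q).trans (Joined.trans ?_ (key q').symm)
    have := this.joined ⟨(q.1.1.2, q.1.2), q.2.2.2⟩ ⟨(q'.1.1.2, q'.1.2), q'.2.2.2⟩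
    exact this.map cJ

/-- homotopic as maps to the complement -/
def HomY (T : Type*) [TopologicalSpace T] (u v : T → ℂ × ℂ) : Prop :=
  ∃ U V : C(T, Ysp A B), (∀ t, (U t).1 = u t) ∧ (∀ t, (V t).1 = v t) ∧ U.Homotopic V

variable {A B} in
theorem HomY.trans {T : Type*} [TopologicalSpace T] {u v w : T → ℂ × ℂ} (h : HomY A B T u v)
    (h' : HomY A B T v w) : HomY A B T u w := by
  obtain ⟨U, V, hU, hV, H⟩ := h
  obtain ⟨U', V', hU', hV', H'⟩ := h'
  refine ⟨U, V', hU, hV', H.trans ?_⟩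
  have : V = U' := by
    ext1 t
    exact Subtype.ext ((hV t).trans (hU' t).symm)
  rw [this]; exact H'

theorem HomY.of {T : Type*} [TopologicalSpace T] (f : I × T → ℂ × ℂ) (hf : Continuous f)
    (hne : ∀ q, A.G (f q).1 ≠ B.G (f q).2) {u v : T → ℂ × ℂ} (hu : ∀ t, f (0, t) = u t)
    (hv : ∀ t, f (1, t) = v t) : HomY A B T u v := by
  let F : I × T → Ysp A B := fun q => ⟨f q, hne q⟩
  have cF : Continuous F := hf.subtype_mk _
  refine ⟨⟨fun t => F (0, t), cF.comp (by fun_prop)⟩, ⟨fun t => F (1, t), cF.comp (by fun_prop)⟩,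
    hu, hv, ⟨⟨⟨F, cF⟩, fun t => rfl, fun t => rfl⟩⟩⟩

theorem Lft.opp {u v : ℂ} {b : ℝ} (hu : Lft u (b + Real.pi)) (hv : Lft v b) : u ≠ v := by
  rintro rfl
  obtain ⟨N, h⟩ := hv.exists_int hu
  have : (1 : ℝ) = 2 * N := by
    have hp := Real.pi_pos
    have : Real.pi * 1 = Real.pi * (2 * N) := by linarith
    exact mul_left_cancel₀ hp.ne' this
  have : (1 : ℤ) = 2 * N := by exact_mod_cast this
  omega

theorem Tsp.null (S : StarNorm A.C B.C) :
    ∃ c : ℂ × ℂ, HomY A B (Tsp A B) (fun q => q.1.1) (fun _ => c) := by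
  obtain ⟨R, cR, R0, Rc, R1, Rfix⟩ := A.exists_in S
  obtain ⟨O, cO, O0, Oc, O1⟩ := B.exists_out S
  obtain ⟨Ξ, cΞ, ΞN, Ξl⟩ := A.exists_polar S
  have hx1 : S.N (A.G (Ξ 0 1)) = 1 := ΞN 0 1 le_rfl
  have cI : Continuous fun s : I => (((s : ℝ) : ℂ)) := by fun_prop
  have cq : Continuous fun q : Tsp A B => q.1 := continuous_subtype_val
  let toY : Tsp A B → {y // B.G y ≠ 0} := fun q => ⟨q.1.1.2, q.2.1⟩
  have ctoY : Continuous toY := by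
    refine Continuous.subtype_mk ?_ _
    fun_prop
  let Y1 : Tsp A B → ℂ := fun q => O (1, toY q)
  have cY1 : Continuous Y1 := by fun_prop
  have hY1 : ∀ q, 2 ≤ S.N (B.G (Y1 q)) := fun q => O1 _
  have lY1 : ∀ q, Lft (B.G (Y1 q)) (m * q.1.2) := by
    intro q
    obtain ⟨c, hc, e⟩ := Oc (1, toY q)
    change Lft (B.G (O (1, toY q))) _
    rw [e]
    exact (Tsp.lftF A B q).smul (by linarith)
  let g : Tsp A B → I → ℝ := fun q s => S.N (B.G ((1 - (s : ℂ)) * Y1 q))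
  have cg : Continuous fun p : Tsp A B × I => g p.1 p.2 := by
    refine S.cont.comp (B.cG.comp ?_)
    fun_prop
  let ρ : Tsp A B → ℝ := fun q => 1 + sSup (g q '' univ)
  have cρ : Continuous ρ := by
    refine continuous_const.add ?_
    exact IsCompact.continuous_sSup (K := (univ : Set I)) isCompact_univ (f := g) cg
  have hρ : ∀ q s, 1 + g q s ≤ ρ q := by
    intro q s
    have hb : BddAbove (g q '' univ) := by
      refine (isCompact_univ.image ?_).bddAbove
      exact cg.comp (Continuous.prodMk_right q)
    have := le_csSup hb ⟨s, mem_univ s, rfl⟩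
    simp only [ρ]; linarith
  have g0 : ∀ q s, 0 ≤ g q s := fun q s => S.nonneg _
  have hρ1 : ∀ q, 1 ≤ ρ q := fun q => by linarith [hρ q 0, g0 q 0]
  let θ : Tsp A B → ℝ := fun q => m * q.1.2 + Real.pi
  have cθ : Continuous θ := by fun_prop
  have cΞ' : ∀ {Z : Type} [TopologicalSpace Z] (u v : Z → ℝ), Continuous u → Continuous v →
      Continuous fun z => Ξ (u z) (v z) := fun u v hu hv =>
    cΞ.comp (hu.prodMk hv)
  have neN : ∀ {u v : ℂ}, S.N u ≠ S.N v → u ≠ v := fun h e => h (by rw [e])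
  have f1 : HomY A B (Tsp A B) (fun q => q.1.1) (fun q => (R (1, q.1.1.1), Y1 q)) := by
    refine HomY.of A B (fun p => (R (p.1, p.2.1.1.1), O (p.1, toY p.2))) (by fun_prop) ?_ ?_ ?_
    · rintro ⟨s, q⟩ e
      have e : A.G (R (s, q.1.1.1)) = B.G (O (s, toY q)) := e
      obtain ⟨c, hc, hc1, e1⟩ := Rc (s, q.1.1.1)
      obtain ⟨c', hc', e2⟩ := Oc (s, toY q)
      rw [e1, e2] at e
      have hcc : (c : ℂ) ≠ 0 := by exact_mod_cast hc.ne'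
      refine q.2.2.1 (c' / c) ?_ ?_
      · rw [le_div_iff₀ hc]; nlinarith
      · push_cast
        field_simp
        simp only [toY] at e
        linear_combination e
    · intro q; simp only [R0, O0, toY]
    · intro q; rfl
  have f2 : HomY A B (Tsp A B) (fun q => (R (1, q.1.1.1), Y1 q)) (fun q => (Ξ 0 1, Y1 q)) := by
    refine HomY.of A B (fun p => (R (1, (1 - (p.1 : ℂ)) * p.2.1.1.1 + p.1 * Ξ 0 1), Y1 p.2))
      (by fun_prop) ?_ ?_ ?_
    · intro p
      apply neN
      have := R1 ((1 - (p.1 : ℂ)) * p.2.1.1.1 + p.1 * Ξ 0 1)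
      have h2 := hY1 p.2
      intro e
      have e : S.N (A.G (R (1, (1 - (p.1 : ℂ)) * p.2.1.1.1 + p.1 * Ξ 0 1))) = S.N (B.G (Y1 p.2)) := e
      linarith
    · intro q; simp
    · intro q; simp [Rfix _ hx1.le]
  have f3 : HomY A B (Tsp A B) (fun q => (Ξ 0 1, Y1 q)) (fun q => (Ξ (θ q) 1, Y1 q)) := by
    refine HomY.of A B (fun p => (Ξ (p.1 * θ p.2) 1, Y1 p.2))
      ((cΞ' _ _ (by fun_prop) (by fun_prop)).prodMk (by fun_prop)) ?_ ?_ ?_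
    · intro p
      apply neN
      have h2 := hY1 p.2
      have h3 := ΞN (p.1 * θ p.2) 1 le_rfl
      beta_reduce
      intro e
      linarith
    · intro q; simp
    · intro q; simp
  have f4 : HomY A B (Tsp A B) (fun q => (Ξ (θ q) 1, Y1 q)) (fun q => (Ξ (θ q) (ρ q), Y1 q)) := by
    refine HomY.of A B (fun p => (Ξ (θ p.2) (1 + p.1 * (ρ p.2 - 1)), Y1 p.2))
      ((cΞ' _ _ (by fun_prop) (by fun_prop)).prodMk (by fun_prop)) ?_ ?_ ?_
    · intro p
      refine Lft.opp (Ξl _ _ ?_) (lY1 p.2)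
      have := hρ1 p.2
      have := p.1.2.1
      nlinarith
    · intro q; simp
    · intro q; simp
  have f5 : HomY A B (Tsp A B) (fun q => (Ξ (θ q) (ρ q), Y1 q)) (fun q => (Ξ (θ q) (ρ q), 0)) := by
    refine HomY.of A B (fun p => (Ξ (θ p.2) (ρ p.2), (1 - (p.1 : ℂ)) * Y1 p.2))
      ((cΞ' _ _ (by fun_prop) (by fun_prop)).prodMk (by fun_prop)) ?_ ?_ ?_
    · intro p
      apply neN
      beta_reduce
      have h3 := ΞN (θ p.2) (ρ p.2) (hρ1 p.2)
      have h4 := hρ p.2 p.1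
      intro e
      have : g p.2 p.1 = S.N (B.G ((1 - (p.1 : ℂ)) * Y1 p.2)) := rfl
      linarith
    · intro q; simp
    · intro q; simp
  have h0 : ∀ q, g q 1 = S.N (B.G 0) := fun q => by simp [g]
  have f6 : HomY A B (Tsp A B) (fun q => (Ξ (θ q) (ρ q), 0))
      (fun q => (Ξ 0 (1 + S.N (B.G 0)), 0)) := by
    refine HomY.of A B (fun p => (Ξ ((1 - p.1) * θ p.2)
        ((1 - p.1) * ρ p.2 + p.1 * (1 + S.N (B.G 0))), 0))
      ((cΞ' _ _ (by fun_prop) (by fun_prop)).prodMk (by fun_prop)) ?_ ?_ ?_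
    · intro p
      apply neN
      beta_reduce
      have h4 := hρ p.2 1
      rw [h0] at h4
      have h5 := S.nonneg (B.G 0)
      have a1 := p.1.2.1
      have a2 := p.1.2.2
      have h6 : 1 + S.N (B.G 0) ≤ (1 - p.1) * ρ p.2 + p.1 * (1 + S.N (B.G 0)) := by nlinarith
      rw [ΞN _ _ (by linarith)]
      intro e; linarith
    · intro q; simp
    · intro q; simp
  exact ⟨_, f1.trans (f2.trans (f3.trans (f4.trans (f5.trans f6))))⟩

theorem par_of_null {T X : Type*} [TopologicalSpace T] [TopologicalSpace X] {f : C(T, X)} {c : X}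
    (h : f.Homotopic (ContinuousMap.const T c)) {p q : T} (γ γ' : Path p q) :
    (γ.map f.continuous).Homotopic (γ'.map f.continuous) := by
  obtain ⟨H⟩ := h
  have h1 := Path.Homotopic.map_trans_evalAt H γ
  have h2 := Path.Homotopic.map_trans_evalAt H γ'
  have e : γ.map (ContinuousMap.const T c).continuous = γ'.map (ContinuousMap.const T c).continuous := by
    ext t; rfl
  rw [e] at h1
  have h3 := h1.trans h2.symm
  -- cancel
  have h4 := h3.hcomp (Path.Homotopic.refl (H.evalAt q).symm)
  have can : ∀ (δ : Path (f p) (f q)),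
      ((δ.trans (H.evalAt q)).trans (H.evalAt q).symm).Homotopic δ := by
    intro δ
    refine Path.Homotopic.trans ⟨Path.Homotopy.transAssoc _ _ _⟩ ?_
    refine Path.Homotopic.trans (Path.Homotopic.hcomp (Path.Homotopic.refl _)
      (Path.Homotopic.symm ⟨Path.Homotopy.reflTransSymm _⟩)) ?_
    exact ⟨Path.Homotopy.transRefl _⟩
  exact (can _).symm.trans (h4.trans (can _))

variable {X : Type*} [TopologicalSpace X] (e : X ≃ₜ {q : ℂ × ℂ // A.G q.1 ≠ B.G q.2})

noncomputable def Kf (z : X) : ℂ := B.h (e z).1.2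
def Vs : Set X := {z | B.G (e z).1.2 ≠ 0 ∧ ∀ t : ℝ, 1 ≤ t → A.G (e z).1.1 ≠ t * B.G (e z).1.2}

theorem Hat.conn_of (S : StarNorm A.C B.C) : PathConnectedSpace (Hat (Kf A B e) (Vs A B e)) := by
  have := Tsp.pathConnected A B S
  let ψ : Tsp A B → Hat (Kf A B e) (Vs A B e) := fun q =>
    ⟨(e.symm ⟨q.1.1, by simpa using q.2.2.1 1 le_rfl⟩, q.1.2), by
      simp only [Kf, Vs, mem_setOf_eq, Homeomorph.apply_symm_apply]
      exact ⟨⟨q.2.1, q.2.2.1⟩, q.2.2.2⟩⟩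
  have cq : Continuous fun q : Tsp A B => q.1 := continuous_subtype_val
  have cψ : Continuous ψ := by
    refine Continuous.subtype_mk ?_ _
    refine Continuous.prodMk (e.symm.continuous.comp (Continuous.subtype_mk (by fun_prop) _))
      (by fun_prop)
  have sψ : Function.Surjective ψ := by
    intro q
    refine ⟨⟨((e q.1.1).1, q.1.2), q.2.1.1, q.2.1.2, q.2.2⟩, ?_⟩
    apply Subtype.ext
    simp [ψ]
  exact sψ.pathConnectedSpace cψ

theorem Hat.par_of (S : StarNorm A.C B.C) : Hat.Par (Kf A B e) (Vs A B e) := by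
  obtain ⟨c, U, V, hU, hV, H⟩ := Tsp.null A B S
  intro p q γ γ'
  let η : Hat (Kf A B e) (Vs A B e) → Tsp A B := fun q =>
    ⟨((e q.1.1).1, q.1.2), q.2.1.1, q.2.1.2, q.2.2⟩
  have cη : Continuous η := by
    refine Continuous.subtype_mk ?_ _
    have c1 : Continuous fun q : Hat (Kf A B e) (Vs A B e) => q.1 := continuous_subtype_val
    have : Continuous fun z => (e z).1 := continuous_subtype_val.comp e.continuous
    fun_prop
  let t0 := η p
  let d : X := e.symm (V t0)
  let E : C(Ysp A B, X) := ⟨fun y => e.symm y, e.symm.continuous⟩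
  let ηc : C(Hat (Kf A B e) (Vs A B e), Tsp A B) := ⟨η, cη⟩
  have hh : (E.comp (U.comp ηc)).Homotopic (E.comp (V.comp ηc)) :=
    (ContinuousMap.Homotopic.refl E).comp (H.comp (ContinuousMap.Homotopic.refl ηc))
  have e2 : E.comp (V.comp ηc) = ContinuousMap.const _ d := by
    ext1 z
    change e.symm (V (η z)) = e.symm (V t0)
    congr 1
    exact Subtype.ext ((hV _).trans (hV _).symm)
  rw [e2] at hh
  have e1 : E.comp (U.comp ηc) = ⟨Hat.proj, Hat.continuous_proj⟩ := by
    ext1 z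
    change e.symm (U (η z)) = z.1.1
    exact (Homeomorph.symm_apply_eq e).2 (Subtype.ext (hU _))
  rw [e1] at hh
  exact par_of_null hh γ γ'

end
end Arr


namespace Arr

section
variable {n m : ℕ} (A : Side n) (B : Side m)

def Mset (l : ℤ) : Set ((ℂ × ℝ) × (ℂ × ℝ)) :=
  {q | Lft (A.h q.1.1) q.1.2 ∧ Lft (B.h q.2.1) q.2.2 ∧ Strip n m l q.1.2 q.2.2}

theorem Strip.swap {l : ℤ} {a b : ℝ} (h : Strip n m l a b) : Strip m n (-l - 1) b a := by
  unfold Strip at *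
  push_cast
  constructor
  · linarith [h.2]
  · linarith [h.1]

theorem joinedIn_of {T : Type*} [TopologicalSpace T] {M : Set T} (f : I → T) (hf : Continuous f)
    (hM : ∀ t, f t ∈ M) {u v : T} (hu : f 0 = u) (hv : f 1 = v) : JoinedIn M u v :=
  ⟨{ toFun := f, continuous_toFun := hf, source' := hu, target' := hv }, hM⟩

variable {A B} in
theorem Mset.swap {l : ℤ} {u v : (ℂ × ℝ) × (ℂ × ℝ)} (h : JoinedIn (Mset A B l) u v) :
    JoinedIn (Mset B A (-l - 1)) u.swap v.swap := by
  obtain ⟨γ, hγ⟩ := h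
  exact ⟨γ.map continuous_swap, fun t => ⟨(hγ t).2.1, (hγ t).1, (hγ t).2.2.swap⟩⟩

theorem Side.follow {y : ℂ} {b : ℝ} (hb : Lft (B.h y) b) (hy : ∀ c ∈ B.C, ‖B.G y‖ ≠ ‖c‖) :
    ∃ Ξ : ℝ → ℂ, Continuous Ξ ∧ Ξ b = y ∧ ∀ t, Lft (B.h (Ξ t)) t := by
  have hne : B.G y ≠ 0 := B.h_ne.1 hb.1
  let H : I × ℝ → ℂ := fun q => B.G y * Complex.exp (((m * q.1 * (q.2 - b) : ℝ) : ℂ) * Complex.I)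
  have cH : Continuous H := by fun_prop
  have nH : ∀ q, ‖H q‖ = ‖B.G y‖ := by
    intro q
    simp only [H, norm_mul, Complex.norm_exp_ofReal_mul_I, mul_one]
  obtain ⟨R, cR, Rp, R0, Rc⟩ := push B.cov cH (f := fun _ => y) (by
    intro q
    rintro (h | h)
    · exact hy _ h (nH q).symm
    · have h : H q = 0 := h
      have := nH q
      rw [h, norm_zero] at this
      exact hne (norm_eq_zero.1 this.symm)) continuous_const (by
    intro t; simp [H])
  refine ⟨fun t => R (1, t), by fun_prop, ?_, ?_⟩
  · exact Rc b (by intro t; simp [H]) 1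
  · have h1 : R (1, b) = y := Rc b (by intro t; simp [H]) 1
    refine lft_rigid (κ := fun t => B.h (R (1, t))) (β := fun t => t) (B.hc.comp (by fun_prop))
      continuous_id B.hn (a0 := b) ?_ (by beta_reduce; rw [h1]; exact hb)
    intro t
    rw [← B.hG, Rp]
    have := (hb.pow m)
    rw [← B.hG] at this
    have := this.mul (lft_exp (m * (t - b)))
    convert this using 1
    · simp [H]
    · ring

variable {B} in
theorem Mset.follow {l : ℤ} {x y : ℂ} {a b : ℝ} (h : ((x, a), (y, b)) ∈ Mset A B l)
    (hy : ∀ c ∈ B.C, ‖B.G y‖ ≠ ‖c‖) :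
    ∃ Ξ : ℝ → ℂ, Ξ b = y ∧ (∀ t, Lft (B.h (Ξ t)) t) ∧ ∀ x' a' b', Lft (A.h x') a' →
      Strip n m l a' b' → JoinedIn (Mset A B l) ((x, a), (y, b)) ((x', a'), (Ξ b', b')) := by
  obtain ⟨Ξ, cΞ, Ξb, hΞ⟩ := B.follow h.2.1 hy
  refine ⟨Ξ, Ξb, hΞ, fun x' a' b' hx' hs => ?_⟩
  have hm : (0 : ℝ) < m := by exact_mod_cast B.hn
  have ⟨h1, h2, h3⟩ := h
  have h3 : Strip n m l a b := h3
  have := A.conn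
  obtain ⟨δ⟩ := this.joined ⟨(x, a), h1⟩ ⟨(x', a'), hx'⟩
  have cδ : Continuous fun t => (δ t).1 := continuous_subtype_val.comp δ.continuous
  let β : I → ℝ := fun t => b + n / m * ((δ t).1.2 - a)
  have cβ : Continuous β := by fun_prop
  have hβ : ∀ t, n * (δ t).1.2 - m * β t = n * a - m * b := by
    intro t; simp only [β]; field_simp; ring
  have j1 : JoinedIn (Mset A B l) ((x, a), (y, b)) ((x', a'), (Ξ (β 1), β 1)) := by
    refine joinedIn_of (fun t => ((δ t).1, (Ξ (β t), β t))) (by fun_prop) ?_ ?_ ?_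
    · intro t
      refine ⟨(δ t).2, hΞ _, ?_⟩
      change Strip n m l (δ t).1.2 (β t)
      unfold Strip; rw [hβ t]; exact h3
    · simp [β, Ξb]
    · simp
  refine j1.trans ?_
  refine joinedIn_of (fun t => ((x', a'), (Ξ ((1 - t) * β 1 + t * b'), (1 - t) * β 1 + t * b')))
    (by fun_prop) ?_ ?_ ?_
  · intro t
    refine ⟨hx', hΞ _, ?_⟩
    have hb1 := hβ 1
    simp only [Path.target] at hb1
    change Strip n m l a' ((1 - t) * β 1 + t * b')
    have t0 := t.2.1
    have t1 := t.2.2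
    unfold Strip at *
    have e : n * a' - m * ((1 - t) * β 1 + t * b') = (1 - t) * (n * a - m * b) + t * (n * a' - m * b') := by
      linear_combination (1 - (t : ℝ)) * hb1
    rw [e]
    constructor
    · rcases eq_or_lt_of_le t0 with h | h
      · rw [← h]; linarith [h3.1]
      · nlinarith [h3.1, hs.1]
    · rcases eq_or_lt_of_le t0 with h | h
      · rw [← h]; linarith [h3.2]
      · nlinarith [h3.2, hs.2]
  · simp
  · simp

theorem Side.generic (U : Set ℂ) (hU : IsOpen U) {y : ℂ} (hy : y ∈ U) (hne : B.G y ≠ 0) :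
    ∃ y' ∈ U, ∀ c ∈ B.C, ‖B.G y'‖ ≠ ‖c‖ := by
  have ho := B.op U hU
  have hc : Continuous fun r : ℝ => (r : ℂ) * B.G y := by fun_prop
  have hnb : {r : ℝ | (r : ℂ) * B.G y ∈ B.G '' U} ∈ 𝓝 (1 : ℝ) := by
    refine (ho.preimage hc).mem_nhds ?_
    exact ⟨y, hy, by simp⟩
  obtain ⟨ε, hε, hb⟩ := Metric.mem_nhds_iff.1 hnb
  have hinf : (Ioo (1 : ℝ) (1 + ε)).Infinite := Ioo_infinite (by linarith)
  have hfin : ((fun c : ℂ => ‖c‖ / ‖B.G y‖) '' B.C).Finite := B.fin.image _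
  obtain ⟨r, hr, hr'⟩ := hinf.exists_notMem_finite hfin
  have : r ∈ Metric.ball (1 : ℝ) ε := by
    rw [Metric.mem_ball, Real.dist_eq, abs_lt]
    constructor <;> linarith [hr.1, hr.2]
  obtain ⟨y', hy', e⟩ := hb this
  refine ⟨y', hy', fun c hc h => hr' ⟨c, hc, ?_⟩⟩
  beta_reduce
  rw [← h, e, norm_mul, Complex.norm_real, Real.norm_eq_abs, abs_of_pos (by linarith [hr.1])]
  field_simp [norm_ne_zero_iff.2 hne]

variable {B} in
theorem Mset.perturb {l : ℤ} {x y : ℂ} {a b : ℝ} (h : ((x, a), (y, b)) ∈ Mset A B l) :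
    ∃ y' b', JoinedIn (Mset A B l) ((x, a), (y, b)) ((x, a), (y', b')) ∧
      ∀ c ∈ B.C, ‖B.G y'‖ ≠ ‖c‖ := by
  have ⟨h1, h2, h3⟩ := h
  have h2 : Lft (B.h y) b := h2
  have h3 : Strip n m l a b := h3
  obtain ⟨U, β, oU, yU, -, cβ, hβ⟩ := exists_local_arg (K := B.h) B.hc (V := {z | B.h z ≠ 0})
    (isOpen_ne_fun B.hc continuous_const) (fun z hz => hz) (z := y) h2.1
  obtain ⟨N, hN⟩ := (hβ y yU).exists_int h2
  let β' : ℂ → ℝ := fun z => β z + 2 * Real.pi * N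
  have cβ' : ContinuousOn β' U := by fun_prop
  have hβ' : ∀ z ∈ U, Lft (B.h z) (β' z) := fun z hz => (hβ z hz).add N
  have e0 : β' y = b := hN.symm
  have hO : IsOpen {t : ℝ | Strip n m l a t} := by
    have c1 : Continuous fun t : ℝ => n * a - m * t := by fun_prop
    exact (isOpen_Ioo (a := 2 * Real.pi * l) (b := 2 * Real.pi * (l + 1))).preimage c1
  have hnb : U ∩ β' ⁻¹' {t : ℝ | Strip n m l a t} ∈ 𝓝 y :=
    (cβ'.isOpen_inter_preimage oU hO).mem_nhds ⟨yU, by change Strip n m l a (β' y); rw [e0]; exact h3⟩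
  obtain ⟨ε, hε, hb⟩ := Metric.mem_nhds_iff.1 hnb
  obtain ⟨y', hy', hg⟩ := B.generic (Metric.ball y ε) Metric.isOpen_ball (Metric.mem_ball_self hε)
    (B.h_ne.1 h2.1)
  refine ⟨y', β' y', ?_, hg⟩
  have hseg : ∀ t : I, (1 - (t : ℝ)) • y + (t : ℝ) • y' ∈ Metric.ball y ε := fun t =>
    (convex_ball y ε) (Metric.mem_ball_self hε) hy' (by linarith [t.2.2]) t.2.1 (by ring)
  refine joinedIn_of (fun t => ((x, a), ((1 - (t : ℝ)) • y + (t : ℝ) • y',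
    β' ((1 - (t : ℝ)) • y + (t : ℝ) • y')))) ?_ ?_ ?_ ?_
  · refine continuous_const.prodMk (Continuous.prodMk (by fun_prop) ?_)
    exact cβ'.comp_continuous (by fun_prop) (fun t => (hb (hseg t)).1)
  · intro t
    exact ⟨h1, hβ' _ (hb (hseg t)).1, (hb (hseg t)).2⟩
  · simp [e0]
  · simp

theorem Mset.isPathConnected (l : ℤ) : IsPathConnected (Mset A B l) := by
  have key : ∀ p ∈ Mset A B l, ∀ q ∈ Mset A B l, JoinedIn (Mset A B l) p q := by
    rintro ⟨⟨x, a⟩, ⟨y, b⟩⟩ hp ⟨⟨x', a'⟩, ⟨y', b'⟩⟩ hq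
    obtain ⟨y1, b1, j1, g1⟩ := Mset.perturb A hp
    have hqs : ((y', b'), (x', a')) ∈ Mset B A (-l - 1) := ⟨hq.2.1, hq.1, hq.2.2.swap⟩
    obtain ⟨x2, a2, j2, g2⟩ := Mset.perturb B hqs
    refine j1.trans ?_
    have j2 := Mset.swap j2
    rw [show -(-l - 1) - 1 = l by ring] at j2
    simp only [Prod.swap_prod_mk] at j2
    refine JoinedIn.trans ?_ j2.symm
    have m1 := j1.mem.2
    have m2 := j2.mem.2
    obtain ⟨Ξ, Ξb, hΞ, hJ⟩ := Mset.follow A m1 g1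
    have hm : (0 : ℝ) < m := by exact_mod_cast B.hn
    have j3 := hJ x2 a2 (b1 + n / m * (a2 - a)) m2.1 (by
      have e : n * a2 - m * (b1 + n / m * (a2 - a)) = n * a - m * b1 := by field_simp; ring
      unfold Strip; rw [e]; exact m1.2.2)
    refine j3.trans ?_
    have m3 := j3.mem.2
    have m3s : ((Ξ (b1 + n / m * (a2 - a)), b1 + n / m * (a2 - a)), (x2, a2)) ∈ Mset B A (-l - 1) :=
      ⟨m3.2.1, m3.1, m3.2.2.swap⟩
    obtain ⟨Ξ', Ξb', -, hJ'⟩ := Mset.follow B m3s g2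
    have j4 := Mset.swap (hJ' y' b' a2 hq.2.1 m2.2.2.swap)
    rw [show -(-l - 1) - 1 = l by ring, Ξb'] at j4
    exact j4
  have hm : (0 : ℝ) < m := by exact_mod_cast B.hn
  obtain ⟨⟨⟨x, a⟩, hx⟩⟩ := A.conn.nonempty
  obtain ⟨y0, hy0⟩ := B.surj 1
  obtain ⟨y, hy1, hy⟩ := B.generic {z | B.G z ≠ 0} (isOpen_ne_fun B.cG continuous_const)
    (y := y0) (by change B.G y0 ≠ 0; rw [hy0]; exact one_ne_zero) (by rw [hy0]; exact one_ne_zero)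
  obtain ⟨Ξ, -, -, hΞ⟩ := B.follow (Lft.arg (B.h_ne.2 hy1)) hy
  have hp : ((x, a), (Ξ ((n * a - 2 * Real.pi * l - Real.pi) / m),
      (n * a - 2 * Real.pi * l - Real.pi) / m)) ∈ Mset A B l := by
    refine ⟨hx, hΞ _, ?_⟩
    change Strip n m l a ((n * a - 2 * Real.pi * l - Real.pi) / m)
    unfold Strip
    rw [mul_div_cancel₀ _ hm.ne']
    constructor <;> linarith [Real.pi_pos]
  exact ⟨_, hp, fun q hq => key _ hp _ hq⟩

theorem not_ray_of {u v : ℂ} {a b : ℝ} (hu : Lft u a) (hv : Lft v b) {l : ℤ}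
    (h1 : 2 * Real.pi * l < a - b) (h2 : a - b < 2 * Real.pi * (l + 1)) {r : ℝ} (hr : 0 < r) :
    u ≠ r * v := by
  intro e
  have := hv.smul hr
  rw [← e] at this
  obtain ⟨N, hN⟩ := this.exists_int hu
  have hp := Real.pi_pos
  have e : a - b = 2 * Real.pi * N := by linarith
  rw [e] at h1 h2
  have h1 : (l : ℝ) < N := lt_of_mul_lt_mul_left h1 (by positivity)
  have h2 : (N : ℝ) < l + 1 := lt_of_mul_lt_mul_left h2 (by positivity)
  have h1 : l < N := by exact_mod_cast h1
  have h2 : N < l + 1 := by exact_mod_cast h2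
  omega

/-- rays avoiding is an open condition -/
theorem isOpen_ray : IsOpen {p : ℂ × ℂ | p.2 ≠ 0 ∧ ∀ t : ℝ, 1 ≤ t → p.1 ≠ t * p.2} := by
  have hT : IsClosed ((fun t : ℝ => (t : ℂ)) '' Ici 1) :=
    Complex.isometry_ofReal.isClosedEmbedding.isClosedMap _ isClosed_Ici
  have hO : IsOpen {p : ℂ × ℂ | p.2 ≠ 0} := isOpen_ne_fun continuous_snd continuous_const
  have hc : ContinuousOn (fun p : ℂ × ℂ => p.1 / p.2) {p : ℂ × ℂ | p.2 ≠ 0} :=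
    continuousOn_fst.div continuousOn_snd (fun p hp => hp)
  convert hc.isOpen_inter_preimage hO hT.isOpen_compl using 1
  ext p
  simp only [mem_setOf_eq, mem_inter_iff, mem_preimage, mem_compl_iff, mem_image, mem_Ici]
  constructor
  · rintro ⟨h, h'⟩
    refine ⟨h, ?_⟩
    rintro ⟨t, ht, e⟩
    exact h' t ht (by rw [e]; field_simp)
  · rintro ⟨h, h'⟩
    refine ⟨h, fun t ht e => h' ⟨t, ht, ?_⟩⟩
    rw [e]; field_simp

variable {X : Type*} [TopologicalSpace X] (e : X ≃ₜ {q : ℂ × ℂ // A.G q.1 ≠ B.G q.2})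

/-- swapped coordinates -/
noncomputable def swapE : X ≃ₜ {q : ℂ × ℂ // B.G q.1 ≠ A.G q.2} :=
  e.trans
    { toFun := fun q => ⟨q.1.swap, q.2.symm⟩
      invFun := fun q => ⟨q.1.swap, q.2.symm⟩
      left_inv := fun q => rfl
      right_inv := fun q => rfl
      continuous_toFun := (continuous_swap.comp continuous_subtype_val).subtype_mk _
      continuous_invFun := (continuous_swap.comp continuous_subtype_val).subtype_mk _ }

theorem continuous_e : Continuous fun z => (e z).1 := continuous_subtype_val.comp e.continuous

theorem isOpen_Vs : IsOpen (Vs A B e) := by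
  have h1 := continuous_e A B e
  have := A.cG
  have := B.cG
  have hc : Continuous fun z => (A.G (e z).1.1, B.G (e z).1.2) := by fun_prop
  exact isOpen_ray.preimage hc

theorem continuous_Kf : Continuous (Kf A B e) := by
  have h1 := continuous_e A B e
  exact B.hc.comp (by fun_prop)

theorem cov_VW (z : X) : z ∈ Vs A B e ∨ z ∈ Vs B A (swapE A B e) := by
  by_contra hcon
  push Not at hcon
  obtain ⟨h1, h2⟩ := hcon
  simp only [Vs, mem_setOf_eq, not_and_or, not_forall, not_not] at h1 h2
  have hne : A.G (e z).1.1 ≠ B.G (e z).1.2 := (e z).2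
  have e1 : ((swapE A B e) z).1.1 = (e z).1.2 := rfl
  have e2 : ((swapE A B e) z).1.2 = (e z).1.1 := rfl
  rw [e1, e2] at h2
  rcases h1 with h1 | ⟨t, ht, h1⟩
  · rcases h2 with h2 | ⟨s, hs, h2⟩
    · exact hne (h2.trans h1.symm)
    · rw [h1] at h2
      have : (s : ℂ) ≠ 0 := by
        intro h; have : s = 0 := by exact_mod_cast h
        linarith
      rcases mul_eq_zero.1 h2.symm with h | h
      · exact this h
      · exact hne (h.trans h1.symm)
  · rcases h2 with h2 | ⟨s, hs, h2⟩
    · rw [h2] at h1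
      have : (t : ℂ) ≠ 0 := by
        intro h; have : t = 0 := by exact_mod_cast h
        linarith
      rcases mul_eq_zero.1 h1.symm with h | h
      · exact this h
      · exact hne (h2.trans h.symm)
    · by_cases h0 : A.G (e z).1.1 = 0
      · rw [h0, mul_zero] at h2
        exact hne (h0.trans h2.symm)
      · have h3 : A.G (e z).1.1 * 1 = A.G (e z).1.1 * (t * s) := by
          rw [h2] at h1; linear_combination h1
        have h4 := mul_left_cancel₀ h0 h3
        have h5 : (1 : ℝ) = t * s := by exact_mod_cast h4
        have h6 : s = 1 := by nlinarith
        rw [h6] at h2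
        exact hne (by rw [h2]; simp)

noncomputable def theVK : VK X n m where
  H := Kf B A (swapE A B e)
  K := Kf A B e
  V := Vs A B e
  W := Vs B A (swapE A B e)
  cH := continuous_Kf B A _
  cK := continuous_Kf A B e
  oV := isOpen_Vs A B e
  oW := isOpen_Vs B A _
  cov := cov_VW A B e
  hK := fun z hz => B.h_ne.2 hz.1
  hH := fun z hz => A.h_ne.2 hz.1
  hM := by
    intro z hV hW r hr h
    simp only [Kf] at h
    rw [← A.hG, ← B.hG] at h
    have h : A.G (e z).1.1 = r * B.G (e z).1.2 := h
    have hW2 : ∀ t : ℝ, 1 ≤ t → B.G (e z).1.2 ≠ t * A.G (e z).1.1 := hW.2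
    rcases le_total 1 r with h1 | h1
    · exact hV.2 r h1 h
    · refine hW2 r⁻¹ ((one_le_inv₀ hr).2 h1) ?_
      rw [h]
      have : (r : ℂ) ≠ 0 := by exact_mod_cast hr.ne'
      push_cast
      field_simp

theorem conn_M (l : ℤ) : PathConnectedSpace ((theVK A B e).MHat l) := by
  have := isPathConnected_iff_pathConnectedSpace.1 (Mset.isPathConnected A B l)
  have hl : ∀ q : Mset A B l, Lft (A.G q.1.1.1) (n * q.1.1.2) ∧ Lft (B.G q.1.2.1) (m * q.1.2.2) := by
    intro q
    rw [A.hG, B.hG]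
    exact ⟨q.2.1.pow n, q.2.2.1.pow m⟩
  have hr1 : ∀ q : Mset A B l, ∀ t : ℝ, 1 ≤ t → A.G q.1.1.1 ≠ t * B.G q.1.2.1 := fun q t ht =>
    not_ray_of (hl q).1 (hl q).2 q.2.2.2.1 q.2.2.2.2 (by linarith)
  have hr2 : ∀ q : Mset A B l, ∀ t : ℝ, 1 ≤ t → B.G q.1.2.1 ≠ t * A.G q.1.1.1 := fun q t ht =>
    not_ray_of (hl q).2 (hl q).1 q.2.2.2.swap.1 q.2.2.2.swap.2 (by linarith)
  let ψ : Mset A B l → (theVK A B e).MHat l := fun q =>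
    ⟨(e.symm ⟨(q.1.1.1, q.1.2.1), by simpa using hr1 q 1 le_rfl⟩, q.1.1.2, q.1.2.2), by
      simp only [theVK, Kf, Vs, swapE, mem_setOf_eq, Homeomorph.trans_apply,
        Homeomorph.apply_symm_apply]
      exact ⟨⟨(hl q).2.1, hr1 q⟩, ⟨(hl q).1.1, hr2 q⟩, q.2⟩⟩
  have cψ : Continuous ψ := by
    refine Continuous.subtype_mk ?_ _
    exact Continuous.prodMk (e.symm.continuous.comp (Continuous.subtype_mk (by fun_prop) _))
      (by fun_prop)
  have sψ : Function.Surjective ψ := by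
    intro q
    refine ⟨⟨(((e q.1.1).1.1, q.1.2.1), ((e q.1.1).1.2, q.1.2.2)), q.2.2.2⟩, ?_⟩
    apply Subtype.ext
    simp [ψ]
  exact sψ.pathConnectedSpace cψ

end

theorem sides_main {n m : ℕ} (A : Side n) (B : Side m) {X : Type*} [TopologicalSpace X]
    (e : X ≃ₜ {q : ℂ × ℂ // A.G q.1 ≠ B.G q.2})
    (S : StarNorm A.C B.C) (S' : StarNorm B.C A.C) (w : X) :
    Nonempty (FundamentalGroup X w ≃* PresentedGroup (Rels m n)) :=
  VK.main B.hn (theVK A B e) (Hat.conn_of A B e S) (Hat.conn_of B A (swapE A B e) S')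
    (conn_M A B e) (Hat.par_of A B e S) (Hat.par_of B A (swapE A B e) S') w

end Arr


namespace Arr

theorem exists_pre {A B : Set ℂ} (hA : A.Finite) (hA0 : (0 : ℂ) ∉ A) (hB0 : (0 : ℂ) ∉ B)
    (hAB : ∀ a ∈ A, ∀ b ∈ B, ∀ r : ℝ, 0 < r → b ≠ r * a) :
    ∃ N : ℂ → ℝ, Continuous N ∧ (∀ (t : ℝ) (u : ℂ), 0 ≤ t → N (t * u) = t * N u) ∧
      (∀ u, 0 ≤ N u) ∧ (∀ a ∈ A, N a = 0) ∧ ∀ b ∈ B, 0 < N b := by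
  induction A, hA using Set.Finite.induction_on with
  | empty =>
    refine ⟨fun u => ‖u‖, continuous_norm, ?_, fun u => norm_nonneg u, by simp, ?_⟩
    · intro t u ht; simp [abs_of_nonneg ht]
    · intro b hb; rw [norm_pos_iff]; rintro rfl; exact hB0 hb
  | @insert a A ha hA ih =>
    obtain ⟨N, cN, hN, N0, NA, NB⟩ := ih (fun h => hA0 (mem_insert_of_mem _ h))
      (fun a' ha' => hAB a' (mem_insert_of_mem _ ha'))
    have ha0 : a ≠ 0 := by rintro rfl; exact hA0 (mem_insert _ _)
    refine ⟨fun u => min (N u) ‖(‖a‖ : ℂ) * u - ‖u‖ * a‖, by fun_prop, ?_, ?_, ?_, ?_⟩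
    · intro t u ht
      have e : (‖a‖ : ℂ) * (t * u) - ‖(t : ℂ) * u‖ * a = t * ((‖a‖ : ℂ) * u - ‖u‖ * a) := by
        rw [norm_mul, Complex.norm_real, Real.norm_eq_abs, abs_of_nonneg ht]; push_cast; ring
      beta_reduce
      rw [e, hN t u ht, norm_mul, Complex.norm_real, Real.norm_eq_abs, abs_of_nonneg ht,
        mul_min_of_nonneg _ _ ht]
    · intro u; exact le_min (N0 u) (norm_nonneg _)
    · rintro a' (rfl | h')
      · simp [N0]
      · simp [NA a' h']
    · intro b hb
      refine lt_min (NB b hb) ?_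
      rw [norm_pos_iff, sub_ne_zero]
      intro e
      have hb0 : b ≠ 0 := by rintro rfl; exact hB0 hb
      refine hAB a (mem_insert _ _) b hb (‖b‖ / ‖a‖) (by positivity) ?_
      have : (‖a‖ : ℂ) ≠ 0 := by simpa using ha0
      push_cast
      field_simp
      linear_combination e

theorem exists_starNorm {A B : Set ℂ} (hA : A.Finite) (hB : B.Finite) (hA0 : (0 : ℂ) ∉ A)
    (hB0 : (0 : ℂ) ∉ B)
    (hAB : ∀ a ∈ A, ∀ b ∈ B, ∀ r : ℝ, 0 < r → b ≠ r * a) : Nonempty (StarNorm A B) := by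
  obtain ⟨N, cN, hN, N0, NA, NB⟩ := exists_pre hA hA0 hB0 hAB
  obtain ⟨P, hP⟩ := (hA.image (fun a => ‖a‖)).bddAbove
  obtain ⟨Q, hQ⟩ := (hB.image (fun b => 1 / N b)).bddAbove
  let P' := max P 0 + 1
  have hP' : 0 < P' := by have := le_max_right P 0; simp only [P']; linarith
  let M := 2 * max Q 0 + 1
  have hM : 0 < M := by have := le_max_right Q 0; simp only [M]; linarith
  refine ⟨⟨fun u => P'⁻¹ * ‖u‖ + M * N u, by fun_prop, ?_, ?_, ?_, ?_⟩⟩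
  · intro t u ht
    beta_reduce
    rw [hN t u ht, norm_mul, Complex.norm_real, Real.norm_eq_abs, abs_of_nonneg ht]; ring
  · intro u hu
    have := N0 u
    have : 0 < ‖u‖ := norm_pos_iff.2 hu
    positivity
  · intro a ha
    beta_reduce
    rw [NA a ha, mul_zero, add_zero, inv_mul_lt_iff₀ hP']
    have : ‖a‖ ≤ P := hP ⟨a, ha, rfl⟩
    have := le_max_left P 0
    simp only [P']; linarith
  · intro b hb
    beta_reduce
    have h1 : 1 / N b ≤ Q := hQ ⟨b, hb, rfl⟩
    have h2 := NB b hb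
    have h3 := le_max_left Q 0
    have h4 : 1 ≤ max Q 0 * N b := by
      rw [div_le_iff₀ h2] at h1
      nlinarith
    have : 0 ≤ P'⁻¹ * ‖b‖ := by positivity
    have : M * N b = 2 * (max Q 0 * N b) + N b := by simp only [M]; ring
    linarith

end Arr


namespace Arr

/-- the space of arguments of a function -/
abbrev Args (k : ℂ → ℂ) : Type := {q : ℂ × ℝ // Lft (k q.1) q.2}

noncomputable def Args.add {k : ℂ → ℂ} (q : Args k) (N : ℤ) : Args k :=
  ⟨(q.1.1, q.1.2 + 2 * Real.pi * N), q.2.add N⟩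

theorem Args.continuous_add {k : ℂ → ℂ} (N : ℤ) : Continuous fun q : Args k => q.add N :=
  Continuous.subtype_mk (by fun_prop) _

theorem Args.add_joined {k : ℂ → ℂ} {p q : Args k} (h : Joined p q) (N : ℤ) :
    Joined (p.add N) (q.add N) := h.map (Args.continuous_add N)

theorem Args.add_add {k : ℂ → ℂ} (p : Args k) (M N : ℤ) : (p.add M).add N = p.add (M + N) := by
  apply Subtype.ext
  simp only [Args.add]
  push_cast
  ext <;> simp; ring

theorem Args.exists_eq_add {k : ℂ → ℂ} {p q : Args k} (h : p.1.1 = q.1.1) : ∃ N, q = p.add N := by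
  have h2 := q.2
  rw [← h] at h2
  obtain ⟨N, hN⟩ := p.2.exists_int h2
  refine ⟨N, Subtype.ext (Prod.ext h.symm hN)⟩

/-- transport along a path off the zeros -/
theorem Args.move {k : ℂ → ℂ} (hk : Continuous k) (p : Args k) {x : ℂ}
    (h : JoinedIn {z | k z ≠ 0} p.1.1 x) : ∃ q : Args k, q.1.1 = x ∧ Joined p q := by
  obtain ⟨γ, hγ⟩ := h
  obtain ⟨r, hr, hr'⟩ := lft_iff.1 p.2
  let L0 : ℂ := Real.log r + p.1.2 * Complex.I
  have hL0 : Complex.exp L0 = k p.1.1 := by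
    rw [hr', Complex.exp_add, ← Complex.ofReal_exp, Real.exp_log hr]
  obtain ⟨R, cR, Rp, R0, -⟩ := push (A := Unit) Complex.isCoveringMapOn_exp
    (H := fun q => k (γ q.1)) (hk.comp (by fun_prop)) (fun q => hγ q.1) (f := fun _ => L0)
    continuous_const (by intro a; simp [hL0])
  have hl : ∀ t, Lft (k (γ t)) (R (t, ())).im := by
    intro t
    rw [← Rp (t, ())]
    refine lft_iff.2 ⟨Real.exp (R (t, ())).re, Real.exp_pos _, ?_⟩
    rw [Complex.ofReal_exp, ← Complex.exp_add, Complex.re_add_im]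
  refine ⟨⟨(γ 1, (R (1, ())).im), hl 1⟩, by simp, ?_⟩
  have := joined_of (T := Args k) (fun t => ⟨(γ t, (R (t, ())).im), hl t⟩)
    (Continuous.subtype_mk (by fun_prop) _)
  convert this using 1
  apply Subtype.ext
  simp [R0, L0]

theorem conn_prod {r : ℕ} (α : Fin r → ℂ) (hα : Function.Injective α) (ε : Fin r → ℕ)
    (hε : ∀ i, 0 < ε i) (hg : Finset.univ.gcd ε = 1) :
    PathConnectedSpace (Args fun x => ∏ i, (x - α i) ^ ε i) := by
  set k : ℂ → ℂ := fun x => ∏ i, (x - α i) ^ ε i with hk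
  have ck : Continuous k := by fun_prop
  have hne : {z | k z ≠ 0} = (range α)ᶜ := by
    ext z
    simp only [hk, mem_setOf_eq, Finset.prod_ne_zero_iff, mem_compl_iff, mem_range, not_exists]
    constructor
    · intro h i e
      exact h i (Finset.mem_univ i) (by rw [e, sub_self, zero_pow (hε i).ne'])
    · intro h i _
      exact pow_ne_zero _ (sub_ne_zero.2 fun e => h i e.symm)
  have hpc : IsPathConnected {z | k z ≠ 0} := by
    rw [hne]
    exact (countable_range α).isPathConnected_compl_of_one_lt_rank
      (by rw [Complex.rank_real_complex]; exact Cardinal.one_lt_two)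
  have move : ∀ (p : Args k) (x : ℂ), k x ≠ 0 → ∃ q : Args k, q.1.1 = x ∧ Joined p q :=
    fun p x hx => p.move ck (hpc.joinedIn _ p.2.1 _ hx)
  obtain ⟨x0, hx0⟩ := hpc.nonempty
  let p0 : Args k := ⟨(x0, _), Lft.arg hx0⟩
  let Γ : AddSubgroup ℤ :=
    { carrier := {N | Joined p0 (p0.add N)}
      zero_mem' := by
        have : p0.add 0 = p0 := by apply Subtype.ext; simp [Args.add]
        change Joined p0 (p0.add 0)
        rw [this]
      add_mem' := by
        intro M N hM hN
        change Joined p0 (p0.add (M + N))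
        have := Args.add_joined hM N
        rw [Args.add_add] at this
        exact Joined.trans hN this
      neg_mem' := by
        intro M hM
        change Joined p0 (p0.add (-M))
        have := Args.add_joined hM (-M)
        rw [Args.add_add, add_neg_cancel] at this
        have e : p0.add 0 = p0 := by apply Subtype.ext; simp [Args.add]
        rw [e] at this
        exact this.symm }
  have hloop : ∀ i, ∃ p : Args k, Joined p (p.add (ε i)) := by
    intro i
    let Q : ℂ → ℂ := fun x => ∏ j ∈ Finset.univ.erase i, (x - α j) ^ ε j
    have cQ : Continuous Q := by fun_prop
    have kQ : ∀ x, k x = (x - α i) ^ ε i * Q x := fun x =>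
      (Finset.mul_prod_erase Finset.univ (fun j => (x - α j) ^ ε j) (Finset.mem_univ i)).symm
    have hQ : Q (α i) ≠ 0 := by
      refine Finset.prod_ne_zero_iff.2 fun j hj => pow_ne_zero _ (sub_ne_zero.2 fun e => ?_)
      exact (Finset.ne_of_mem_erase hj) (hα e).symm
    obtain ⟨U, β, oU, yU, -, cβ, hβ⟩ := exists_local_arg (K := Q) cQ (V := {z | Q z ≠ 0})
      (isOpen_ne_fun cQ continuous_const) (fun z hz => hz) (z := α i) hQ
    obtain ⟨ρ, hρ, hb⟩ := Metric.mem_nhds_iff.1 (oU.mem_nhds yU)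
    let c : ℝ → ℂ := fun θ => α i + (ρ / 2 : ℝ) * Complex.exp (θ * Complex.I)
    have cc : Continuous c := by fun_prop
    have hcU : ∀ θ, c θ ∈ U := by
      intro θ
      apply hb
      rw [mem_ball_iff_norm]
      simp only [c, add_sub_cancel_left, norm_mul, Complex.norm_exp_ofReal_mul_I, mul_one,
        Complex.norm_real, Real.norm_eq_abs]
      rw [abs_of_pos (by positivity)]; linarith
    have hl : ∀ θ, Lft (k (c θ)) (ε i * θ + β (c θ)) := by
      intro θ
      rw [kQ]
      refine Lft.mul (Lft.pow ?_ _) (hβ _ (hcU θ))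
      simp only [c, add_sub_cancel_left]
      exact (lft_exp θ).smul (by positivity)
    have hper : c (2 * Real.pi) = c 0 := by
      simp [c]
    have := joined_of (T := Args k) (fun t => ⟨(c (2 * Real.pi * t), ε i * (2 * Real.pi * t) +
      β (c (2 * Real.pi * t))), hl _⟩) (Continuous.subtype_mk (Continuous.prodMk (by fun_prop)
        (Continuous.add (by fun_prop) (cβ.comp_continuous (by fun_prop) fun t => hcU _))) _)
    refine ⟨⟨(c 0, ε i * 0 + β (c 0)), hl 0⟩, ?_⟩
    convert this using 1
    · apply Subtype.ext; simp
    · apply Subtype.ext; simp [Args.add, hper]; ring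
  have hmem : ∀ i, (ε i : ℤ) ∈ Γ := by
    intro i
    obtain ⟨p, hp⟩ := hloop i
    obtain ⟨q, hq, j⟩ := move p x0 hx0
    obtain ⟨N, hN⟩ := Args.exists_eq_add (p := q) (q := p0) hq
    change Joined p0 (p0.add (ε i))
    have j1 : Joined q (q.add (ε i)) := j.symm.trans (hp.trans (Args.add_joined j _))
    have j2 := Args.add_joined j1 N
    rw [hN, Args.add_add, add_comm N, ← Args.add_add]
    exact j2
  have hone : (1 : ℤ) ∈ Γ := by
    obtain ⟨d, hd⟩ := Int.subgroup_cyclic Γ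
    rw [hd]
    have h1 : ∀ i, d.natAbs ∣ ε i := by
      intro i
      have := hmem i
      rw [hd, AddSubgroup.mem_closure_singleton] at this
      obtain ⟨z, hz⟩ := this
      rw [← Int.natCast_dvd_natCast, Int.natAbs_dvd]
      exact ⟨z, by rw [← hz, smul_eq_mul, mul_comm]⟩
    have h2 : d.natAbs ∣ 1 := by
      rw [← hg]; exact Finset.dvd_gcd fun i _ => h1 i
    have h3 := Nat.dvd_one.1 h2
    rw [AddSubgroup.mem_closure_singleton]
    rcases Int.natAbs_eq d with h | h
    · exact ⟨1, by rw [h, h3]; simp⟩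
    · exact ⟨-1, by rw [h, h3]; simp⟩
  have hall : ∀ N, N ∈ Γ := by
    intro N
    have := Γ.zsmul_mem hone N
    simpa using this
  have key : ∀ p : Args k, Joined p p0 := by
    intro p
    obtain ⟨q, hq, j⟩ := move p x0 hx0
    obtain ⟨N, hN⟩ := Args.exists_eq_add (p := p0) (q := q) hq.symm
    refine j.trans ?_
    rw [hN]
    exact Joined.symm (hall N)
  exact ⟨⟨p0⟩, fun p q => (key p).trans (key q).symm⟩

end Arr


namespace Arr

/-- the twist -/
noncomputable def tw (lam : ℝ) (u : ℂ) : ℂ := u * Complex.exp ((lam * ‖u‖ : ℝ) * Complex.I)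

theorem tw_norm (lam : ℝ) (u : ℂ) : ‖tw lam u‖ = ‖u‖ := by
  simp only [tw, norm_mul, Complex.norm_exp_ofReal_mul_I, mul_one]

theorem tw_tw (lam : ℝ) (u : ℂ) : tw (-lam) (tw lam u) = u := by
  rw [tw, tw_norm, tw, mul_assoc, ← Complex.exp_add]
  push_cast
  rw [show (lam : ℂ) * ‖u‖ * Complex.I + -lam * ‖u‖ * Complex.I = 0 by ring]
  simp

theorem tw_cont (lam : ℝ) : Continuous (tw lam) := by
  unfold tw; fun_prop

noncomputable def twH (lam : ℝ) : ℂ ≃ₜ ℂ where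
  toFun := tw lam
  invFun := tw (-lam)
  left_inv := tw_tw lam
  right_inv := fun u => by
    have := tw_tw (-lam) u
    rwa [neg_neg] at this
  continuous_toFun := tw_cont lam
  continuous_invFun := tw_cont (-lam)

theorem tw_zero_iff {lam : ℝ} {u : ℂ} : tw lam u = 0 ↔ u = 0 := by
  rw [← norm_eq_zero, tw_norm, norm_eq_zero]

/-- nonzero critical values -/
def crit (g : ℂ → ℂ) : Set ℂ := {c | c ≠ 0 ∧ ∃ x, deriv g x = 0 ∧ g x = c}

theorem exists_side {r d : ℕ} (hd : 0 < d) (α : Fin r → ℂ) (hα : Function.Injective α)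
    (e : Fin r → ℕ) (he : ∀ i, 0 < e i) (hdg : ∑ i, e i = d) (g : ℂ → ℂ)
    (hg : ∀ x, g x = ∏ i, (x - α i) ^ e i) (lam : ℝ) :
    ∃ D : Side (Finset.univ.gcd e), (∀ x, D.G x = tw lam (g x)) ∧ D.C = tw lam '' crit g ∧
      (crit g).Finite := by
  have hr : ∃ i : Fin r, True := by
    by_contra hcon
    push Not at hcon
    have : ∑ i, e i = 0 := Finset.sum_eq_zero fun i _ => (hcon i).elim
    omega
  obtain ⟨i0, -⟩ := hr
  set n := Finset.univ.gcd e with hn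
  have hndvd : ∀ i, n ∣ e i := fun i => Finset.gcd_dvd (Finset.mem_univ i)
  have hn0 : 0 < n := Nat.pos_of_dvd_of_pos (hndvd i0) (he i0)
  have hnr : (n : ℝ) ≠ 0 := by exact_mod_cast hn0.ne'
  let ε : Fin r → ℕ := fun i => e i / n
  have hε : ∀ i, ε i * n = e i := fun i => Nat.div_mul_cancel (hndvd i)
  have hε0 : ∀ i, 0 < ε i := fun i => Nat.div_pos (Nat.le_of_dvd (he i) (hndvd i)) hn0
  have hε1 : Finset.univ.gcd ε = 1 := Finset.gcd_div_eq_one (Finset.mem_univ i0) (he i0).ne'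
  let k : ℂ → ℂ := fun x => ∏ i, (x - α i) ^ ε i
  have ck : Continuous k := by fun_prop
  have hk : ∀ x, g x = k x ^ n := by
    intro x
    rw [hg, ← Finset.prod_pow]
    refine Finset.prod_congr rfl fun i _ => ?_
    rw [← pow_mul, hε]
  have cg : Continuous g := by
    have : g = fun x => k x ^ n := funext hk
    rw [this]; exact ck.pow n
  let P : Polynomial ℂ := ∏ i, (Polynomial.X - Polynomial.C (α i)) ^ e i
  have hP : g = fun x => P.eval x := by
    funext x; rw [hg]; simp [P, Polynomial.eval_prod]
  have hPd : P.natDegree = d := by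
    simp only [P]
    rw [Polynomial.natDegree_prod _ _ (fun i _ => pow_ne_zero _ (Polynomial.X_sub_C_ne_zero _))]
    simp [Polynomial.natDegree_pow, hdg]
  have hderiv : ∀ x, deriv g x = P.derivative.eval x := by
    intro x; rw [hP]; exact Polynomial.deriv P
  have hD0 : P.derivative ≠ 0 := by
    intro h
    have := Polynomial.natDegree_eq_zero_of_derivative_eq_zero h
    omega
  have hfin : (crit g).Finite := by
    have : {x | P.derivative.eval x = 0}.Finite := by
      refine (P.derivative.roots.toFinset.finite_toSet).subset ?_
      intro x hx
      simpa [hD0] using hx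
    refine (this.image g).subset ?_
    rintro c ⟨-, x, hx, rfl⟩
    exact ⟨x, (hderiv x).symm.trans hx, rfl⟩
  have hsurj : Function.Surjective g := by
    intro c
    have hdeg : (P - Polynomial.C c).degree ≠ 0 := by
      rw [Polynomial.degree_sub_C (by
        rw [← Polynomial.natDegree_pos_iff_degree_pos, hPd]; exact hd)]
      intro h
      have h2 := Polynomial.natDegree_eq_of_degree_eq_some (n := 0) h
      omega
    obtain ⟨x, hx⟩ := IsAlgClosed.exists_root _ hdeg
    refine ⟨x, ?_⟩
    rw [hP]
    simpa [sub_eq_zero] using hx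
  have hop : IsOpenMap g := by
    have han : AnalyticOnNhd ℂ g univ := by
      have : Differentiable ℂ g := by rw [hP]; exact P.differentiable
      exact fun x _ => this.analyticAt x
    rcases han.is_constant_or_isOpenMap with ⟨w, h⟩ | h
    · obtain ⟨x, hx⟩ := hsurj (w + 1)
      rw [h x] at hx
      simp at hx
    · exact h
  have hcov : IsCoveringMapOn g (crit g ∪ {0})ᶜ := by
    rw [hP]
    refine P.isCoveringMapOn_eval.mono ?_
    rintro c hc ⟨x, hx, rfl⟩
    by_cases h0 : P.eval x = 0
    · exact hc (Or.inr h0)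
    · refine hc (Or.inl ⟨h0, x, ?_, rfl⟩)
      rw [← hP, hderiv]; exact hx
  let h : ℂ → ℂ := fun x => k x * Complex.exp ((lam * ‖g x‖ / n : ℝ) * Complex.I)
  have hch : Continuous h := by fun_prop
  refine ⟨⟨fun x => tw lam (g x), h, tw lam '' crit g, hn0, hch, ?_, hfin.image _, ?_, ?_, ?_, ?_, ?_⟩,
    fun x => rfl, rfl, hfin⟩
  · intro x
    simp only [h, tw]
    rw [mul_pow, ← hk, ← Complex.exp_nat_mul]
    congr 2
    push_cast
    have : (n : ℂ) ≠ 0 := by exact_mod_cast hn0.ne'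
    field_simp
  · rintro ⟨c, hc, h0⟩
    exact hc.1 (tw_zero_iff.1 h0)
  · refine (hcov.homeomorph_comp (twH lam)).mono ?_
    intro c hc h'
    apply hc
    have e1 : tw lam (tw (-lam) c) = c := by
      have := tw_tw (-lam) c
      rwa [neg_neg] at this
    rcases h' with h' | h'
    · exact Or.inl ⟨tw (-lam) c, h', e1⟩
    · have h' : tw (-lam) c = 0 := h'
      exact Or.inr (tw_zero_iff.1 h')
  · exact (twH lam).surjective.comp hsurj
  · exact (twH lam).isOpenMap.comp hop
  · have hc := conn_prod α hα ε hε0 hε1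
    let ψ : Args k → {q : ℂ × ℝ // Lft (h q.1) q.2} := fun q =>
      ⟨(q.1.1, q.1.2 + lam * ‖g q.1.1‖ / n), q.2.mul (lft_exp _)⟩
    have cψ : Continuous ψ := Continuous.subtype_mk (by fun_prop) _
    have sψ : Function.Surjective ψ := by
      intro q
      refine ⟨⟨(q.1.1, q.1.2 - lam * ‖g q.1.1‖ / n), ?_⟩, ?_⟩
      · have := q.2.mul (lft_exp (-(lam * ‖g q.1.1‖ / n)))
        have e1 : h q.1.1 * Complex.exp ((-(lam * ‖g q.1.1‖ / n) : ℝ) * Complex.I) = k q.1.1 := by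
          simp only [h]
          rw [mul_assoc, ← Complex.exp_add, ← add_mul, ← Complex.ofReal_add, add_neg_cancel]
          simp
        rw [e1, ← sub_eq_add_neg] at this
        exact this
      · apply Subtype.ext
        simp [ψ]
    exact sψ.pathConnectedSpace cψ

theorem exists_twist {A B : Set ℂ} (hA : A.Finite) (hB : B.Finite) (hA0 : (0 : ℂ) ∉ A)
    (hB0 : (0 : ℂ) ∉ B) (hAB : ∀ a ∈ A, a ∉ B) :
    ∃ lam : ℝ, ∀ a ∈ A, ∀ b ∈ B, ∀ r : ℝ, 0 < r → tw lam b ≠ r * tw lam a := by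
  let bad : Set ℝ := ⋃ a ∈ A, ⋃ b ∈ B, range fun N : ℤ =>
    (Complex.arg (a / b) + 2 * Real.pi * N) / (‖b‖ - ‖a‖)
  have hbad : bad.Countable := hA.countable.biUnion fun a _ => hB.countable.biUnion fun b _ =>
    countable_range _
  obtain ⟨lam, hl⟩ := (hbad.dense_compl ℝ).nonempty
  refine ⟨lam, fun a ha b hb r hr e => ?_⟩
  have ha0 : a ≠ 0 := fun h => hA0 (h ▸ ha)
  have hb0 : b ≠ 0 := fun h => hB0 (h ▸ hb)
  have hnorm : ‖b‖ = r * ‖a‖ := by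
    have := congrArg norm e
    rwa [norm_mul, tw_norm, tw_norm, Complex.norm_real, Real.norm_eq_abs, abs_of_pos hr] at this
  by_cases hab : ‖b‖ = ‖a‖
  · have hr1 : r = 1 := by
      have : 0 < ‖a‖ := norm_pos_iff.2 ha0
      rw [hab] at hnorm
      nlinarith
    rw [hr1, Complex.ofReal_one, one_mul] at e
    have : b = a := by rw [← tw_tw lam b, e, tw_tw]
    exact hAB a ha (this ▸ hb)
  · have hδ : ‖b‖ - ‖a‖ ≠ 0 := sub_ne_zero.2 hab
    have hq : Lft (a / b) (lam * (‖b‖ - ‖a‖)) := by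
      refine lft_iff.2 ⟨r⁻¹, by positivity, ?_⟩
      have hrc : (r : ℂ) ≠ 0 := by exact_mod_cast hr.ne'
      simp only [tw] at e
      have e3 : Complex.exp ((lam * (‖b‖ - ‖a‖) : ℝ) * Complex.I) *
          Complex.exp ((lam * ‖a‖ : ℝ) * Complex.I) = Complex.exp ((lam * ‖b‖ : ℝ) * Complex.I) := by
        rw [← Complex.exp_add]; congr 1; push_cast; ring
      rw [← e3] at e
      have hx := Complex.exp_ne_zero ((lam * ‖a‖ : ℝ) * Complex.I)
      have e4 : b * Complex.exp ((lam * (‖b‖ - ‖a‖) : ℝ) * Complex.I) = r * a := by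
        refine mul_right_cancel₀ hx ?_
        linear_combination e
      push_cast at e4 ⊢
      field_simp
      linear_combination -e4
    obtain ⟨N, hN⟩ := (Lft.arg (div_ne_zero ha0 hb0)).exists_int hq
    apply hl
    simp only [bad, mem_iUnion]
    refine ⟨a, ha, b, hb, N, ?_⟩
    beta_reduce
    rw [← hN]
    field_simp

end Arr

open Arr in
theorem stmt_8 (r s d : ℕ) (hd : 0 < d)
    (α : Fin r → ℂ) (β : Fin s → ℂ)
    (hα : Function.Injective α) (hβ : Function.Injective β)
    (e : Fin r → ℕ) (μ : Fin s → ℕ) (he : ∀ i, 0 < e i) (hμ : ∀ j, 0 < μ j)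
    (hdg : ∑ i, e i = d) (hdf : ∑ j, μ j = d)
    (g f : ℂ → ℂ)
    (hg : ∀ x, g x = ∏ i, (x - α i) ^ e i)
    (hf : ∀ y, f y = ∏ j, (y - β j) ^ μ j)
    (hsing : ∀ x y : ℂ, g x = f y → deriv g x = 0 → deriv f y = 0 → g x = 0)
    (n m : ℕ) (hn : n = Finset.univ.gcd e) (hm : m = Finset.univ.gcd μ)
    (rels : Set (FreeGroup (ZMod m)))
    (hrels : rels = {w : FreeGroup (ZMod m) | ∃ kk : ZMod m,
      w = (FreeGroup.of kk)⁻¹ *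
          (((List.range n).map (fun i => FreeGroup.of ((i + 1 : ℕ) : ZMod m))).prod) *
          FreeGroup.of (kk + (n : ZMod m)) *
          (((List.range n).map (fun i => FreeGroup.of ((i + 1 : ℕ) : ZMod m))).prod)⁻¹})
    (p : {q : ℂ × ℂ // g q.1 ≠ f q.2}) :
    Nonempty (FundamentalGroup {q : ℂ × ℂ // g q.1 ≠ f q.2} p ≃* PresentedGroup rels) := by
  subst hn hm
  have hr : rels = Rels (Finset.univ.gcd μ) (Finset.univ.gcd e) := hrels
  rw [hr]
  obtain ⟨-, -, -, finG⟩ := exists_side hd α hα e he hdg g hg 0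
  obtain ⟨-, -, -, finF⟩ := exists_side hd β hβ μ hμ hdf f hf 0
  have disj : ∀ a ∈ crit g, a ∉ crit f := by
    rintro a ⟨ha, x, hx, rfl⟩ ⟨-, y, hy, e⟩
    exact ha (hsing x y e.symm hx hy)
  obtain ⟨lam, hlam⟩ := exists_twist finG finF (fun h => h.1 rfl) (fun h => h.1 rfl) disj
  obtain ⟨A, hA, hAC, -⟩ := exists_side hd α hα e he hdg g hg lam
  obtain ⟨B, hB, hBC, -⟩ := exists_side hd β hβ μ hμ hdf f hf lam
  have ray : ∀ a ∈ A.C, ∀ b ∈ B.C, ∀ r : ℝ, 0 < r → b ≠ r * a := by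
    rw [hAC, hBC]
    rintro _ ⟨a, ha, rfl⟩ _ ⟨b, hb, rfl⟩ r hr
    exact hlam a ha b hb r hr
  have ray' : ∀ b ∈ B.C, ∀ a ∈ A.C, ∀ r : ℝ, 0 < r → a ≠ r * b := by
    intro b hb a ha r hr h
    refine ray a ha b hb r⁻¹ (by positivity) ?_
    rw [h]
    have : (r : ℂ) ≠ 0 := by exact_mod_cast hr.ne'
    push_cast
    field_simp
  obtain ⟨S⟩ := exists_starNorm A.fin B.fin A.zero B.zero ray
  obtain ⟨S'⟩ := exists_starNorm B.fin A.fin B.zero A.zero ray'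
  have hiff : ∀ q : ℂ × ℂ, g q.1 ≠ f q.2 ↔ A.G q.1 ≠ B.G q.2 := by
    intro q
    rw [hA, hB]
    exact ((twH lam).injective.ne_iff).symm
  let E : {q : ℂ × ℂ // g q.1 ≠ f q.2} ≃ₜ {q : ℂ × ℂ // A.G q.1 ≠ B.G q.2} :=
    { toFun := fun q => ⟨q.1, (hiff _).1 q.2⟩
      invFun := fun q => ⟨q.1, (hiff _).2 q.2⟩
      left_inv := fun q => rfl
      right_inv := fun q => rfl
      continuous_toFun := continuous_subtype_val.subtype_mk _
      continuous_invFun := continuous_subtype_val.subtype_mk _ }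
  exact sides_main A B E S S' p
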